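/- Let E, F, H ⊂ ℝ² be compact sets with dim_H(E) + dim_H(F) + dim_H(H) > 4. Then the set E·(F+H) = { x·(y+z) : x ∈ E, y ∈ F, z ∈ H } ⊂ ℝ has positive one-dimensional Lebesgue measure. -/

import Mathlib

open MeasureTheory Metric
open scoped ENNReal RealInnerProductSpace

/-- In a tree of nested cells `(q k) ⁻¹' {a}`, an outer measure bounded by `w k` on cells of
generation `k` is dominated in mass by a measure satisfying the same bounds down to any given
generation. -/
theorem exists_measure_cell_le {X ι : Type*} [MeasurableSpace X] (q : ℕ → X → ι) (π : ι → ι)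
    (hq : ∀ k x, q k x = π (q (k + 1) x)) (hπ : ∀ a, (π ⁻¹' {a}).Finite)
    (hmeas : ∀ k a, MeasurableSet (q k ⁻¹' {a}))
    (c : OuterMeasure X) (w : ℕ → ℝ≥0∞) (hw : ∀ k, w k ≠ ∞) {K : Set X} (hK : MeasurableSet K)
    (m : ℕ) (hc : ∀ k, m ≤ k → ∀ a, c (K ∩ q k ⁻¹' {a}) ≤ w k) (j : ℕ) :
    ∀ k, m ≤ k → ∀ a, ∃ ν : Measure X, ν (K ∩ q k ⁻¹' {a})ᶜ = 0 ∧
      c (K ∩ q k ⁻¹' {a}) ≤ ν Set.univ ∧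
      ∀ l, k ≤ l → l ≤ k + j → ∀ b, ν (q l ⁻¹' {b}) ≤ w l := by
  classical
  have hanc : ∀ k l, k ≤ l → ∀ x y, q l x = q l y → q k x = q k y := by
    intro k l hkl
    induction l, hkl using Nat.le_induction with
    | base => exact fun x y h => h
    | succ l _ ih =>
      intro x y h
      exact ih x y (by rw [hq l x, hq l y, h])
  induction j with
  | zero =>
    intro k hk a
    rcases (K ∩ q k ⁻¹' {a}).eq_empty_or_nonempty with h | ⟨p, hp⟩
    · exact ⟨0, by simp, by simp [h], by simp⟩
    · refine ⟨w k • Measure.dirac p, ?_, ?_, ?_⟩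
      · rw [Measure.smul_apply, Measure.dirac_apply' _ (hK.inter (hmeas k a)).compl]
        simp [hp.1, hp.2]
      · simpa using hc k hk a
      · intro l hl hl' b
        obtain rfl : l = k := by omega
        rw [Measure.smul_apply, smul_eq_mul]
        exact mul_le_of_le_one_right' prob_le_one
  | succ j ih =>
    intro k hk a
    choose ν hν0 hνc hνb using fun b => ih (k + 1) (by omega) b
    set S := (hπ a).toFinset with hS
    set ν' := ∑ b ∈ S, ν b with hν'
    have hsub : ∀ b ∈ S, K ∩ q (k + 1) ⁻¹' {b} ⊆ K ∩ q k ⁻¹' {a} := by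
      rintro b hb x ⟨hxK, hx⟩
      simp only [hS, Set.Finite.mem_toFinset, Set.mem_preimage, Set.mem_singleton_iff] at hb hx
      exact ⟨hxK, by simp [hq k x, hx, hb]⟩
    have h0 : ν' (K ∩ q k ⁻¹' {a})ᶜ = 0 := by
      rw [hν', Measure.finsetSum_apply]
      exact Finset.sum_eq_zero fun b hb =>
        measure_mono_null (Set.compl_subset_compl.2 (hsub b hb)) (hν0 b)
    have hmass : c (K ∩ q k ⁻¹' {a}) ≤ ν' Set.univ := by
      calc c (K ∩ q k ⁻¹' {a}) ≤ c (⋃ b ∈ S, K ∩ q (k + 1) ⁻¹' {b}) := by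
            refine c.mono ?_
            rintro x ⟨hxK, hx⟩
            simp only [Set.mem_iUnion]
            refine ⟨q (k + 1) x, ?_, hxK, rfl⟩
            simpa [hS, ← hq k x] using hx
        _ ≤ ∑ b ∈ S, c (K ∩ q (k + 1) ⁻¹' {b}) := measure_biUnion_finset_le _ _
        _ ≤ ∑ b ∈ S, ν b Set.univ := Finset.sum_le_sum fun b _ => hνc b
        _ = ν' Set.univ := by rw [hν', Measure.finsetSum_apply]
    have hb' : ∀ l, k + 1 ≤ l → l ≤ k + 1 + j → ∀ b, ν' (q l ⁻¹' {b}) ≤ w l := by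
      intro l hl hl' b
      rcases (q l ⁻¹' {b}).eq_empty_or_nonempty with h | ⟨x, hx⟩
      · simp [h]
      rw [hν', Measure.finsetSum_apply]
      refine (Finset.sum_le_sum_of_subset (S.subset_insert (q (k + 1) x))).trans ?_
      rw [Finset.sum_eq_single_of_mem (q (k + 1) x) (Finset.mem_insert_self _ _)]
      · exact hνb _ l hl hl' b
      · intro d _ hd
        refine measure_mono_null ?_ (hν0 d)
        rintro y hy ⟨_, hyd⟩
        exact hd (hyd.symm.trans (hanc (k + 1) l hl y x (hy.trans hx.symm)))
    have hfin : ν' Set.univ ≠ ∞ := by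
      rw [hν', Measure.finsetSum_apply]
      refine ENNReal.sum_ne_top.2 fun b _ => ?_
      refine ne_top_of_le_ne_top (hw (k + 1)) ?_
      calc ν b Set.univ ≤ ν b (q (k + 1) ⁻¹' {b}) + ν b (K ∩ q (k + 1) ⁻¹' {b})ᶜ :=
            (measure_mono fun x _ => by
              by_cases h : x ∈ q (k + 1) ⁻¹' {b}
              · exact Or.inl h
              · exact Or.inr fun h' => h h'.2).trans (measure_union_le _ _)
        _ ≤ w (k + 1) := by simpa [hν0 b] using hνb b (k + 1) le_rfl (by omega) b
    by_cases hle : ν' Set.univ ≤ w k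
    · refine ⟨ν', h0, hmass, fun l hl hl' b => ?_⟩
      rcases hl.eq_or_lt with rfl | hlt
      · exact (measure_mono (Set.subset_univ _)).trans hle
      · exact hb' l hlt (by omega) b
    · push Not at hle
      have hne : ν' Set.univ ≠ 0 := (zero_le.trans_lt hle).ne'
      have hr : w k / ν' Set.univ ≤ 1 := ENNReal.div_le_of_le_mul (by simpa using hle.le)
      have hu : (w k / ν' Set.univ) * ν' Set.univ = w k := ENNReal.div_mul_cancel hne hfin
      refine ⟨(w k / ν' Set.univ) • ν', ?_, ?_, fun l hl hl' b => ?_⟩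
      · simp [h0]
      · simpa [hu] using hc k hk a
      · rcases hl.eq_or_lt with rfl | hlt
        · refine (measure_mono (Set.subset_univ _)).trans ?_
          simp [hu]
        · rw [Measure.smul_apply, smul_eq_mul]
          exact (mul_le_of_le_one_left' hr).trans (hb' l hlt (by omega) b)

/-- The growth condition `μ (B(x, r)) ≤ C r ^ s`. -/
def FrostmanWith {X : Type*} [PseudoMetricSpace X] [MeasurableSpace X] (μ : Measure X)
    (C s : ℝ) : Prop :=
  ∀ x r, 0 < r → μ (ball x r) ≤ ENNReal.ofReal (C * r ^ s)

/-- The index of the dyadic square of side `2⁻ᵏ` containing `p`. -/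
noncomputable def dyadicIndex (k : ℕ) (p : EuclideanSpace ℝ (Fin 2)) : Fin 2 → ℤ :=
  fun i => ⌊2 ^ k * p i⌋

theorem dyadicIndex_eq_div (k : ℕ) (p : EuclideanSpace ℝ (Fin 2)) :
    dyadicIndex k p = fun i => dyadicIndex (k + 1) p i / 2 := by
  funext i
  have h : (2 : ℝ) ^ k * p i = 2 ^ (k + 1) * p i / (2 : ℕ) := by push_cast; ring
  simp only [dyadicIndex]
  rw [h, Int.floor_div_natCast]
  norm_num

theorem measurableSet_dyadicIndex_preimage (k : ℕ) (a : Fin 2 → ℤ) :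
    MeasurableSet (dyadicIndex k ⁻¹' {a}) := by
  have : Measurable (dyadicIndex k) := by
    refine measurable_pi_lambda _ fun i => ?_
    exact Int.measurable_floor.comp (by fun_prop)
  exact this (MeasurableSet.singleton a)

theorem dist_le_of_dyadicIndex_eq {k : ℕ} {x y : EuclideanSpace ℝ (Fin 2)}
    (h : dyadicIndex k x = dyadicIndex k y) : dist x y ≤ 2 * (1 / 2) ^ k := by
  have hi : ∀ i, |x i - y i| ≤ (1 / 2) ^ k := by
    intro i
    have h1 := Int.abs_sub_lt_one_of_floor_eq_floor (congrFun h i)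
    rw [← mul_sub, abs_mul, abs_of_pos (by positivity : (0 : ℝ) < 2 ^ k)] at h1
    rw [one_div, inv_pow, ← one_div, le_div_iff₀ (by positivity)]
    linarith
  have hp : (0 : ℝ) ≤ (1 / 2) ^ k := by positivity
  rw [EuclideanSpace.dist_eq, Fin.sum_univ_two, Real.dist_eq, Real.dist_eq]
  refine Real.sqrt_le_iff.2 ⟨by positivity, ?_⟩
  nlinarith [hi 0, hi 1, pow_le_pow_left₀ (abs_nonneg _) (hi 0) 2,
    pow_le_pow_left₀ (abs_nonneg _) (hi 1) 2]

/-- A ball of radius at most `2⁻ᵏ` is covered by nine dyadic squares of side `2⁻ᵏ`. -/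
theorem measure_ball_le_of_dyadicIndex {μ : Measure (EuclideanSpace ℝ (Fin 2))} {k : ℕ}
    {w : ℝ≥0∞} (h : ∀ b, μ (dyadicIndex k ⁻¹' {b}) ≤ w) (x : EuclideanSpace ℝ (Fin 2)) {r : ℝ}
    (hr : r ≤ (1 / 2) ^ k) : μ (ball x r) ≤ 9 * w := by
  set S : Finset (Fin 2 → ℤ) :=
    Fintype.piFinset fun i => Finset.Icc (dyadicIndex k x i - 1) (dyadicIndex k x i + 1) with hS
  have hcard : S.card = 9 := by
    rw [hS, Fintype.card_piFinset, Fin.prod_univ_two, Int.card_Icc, Int.card_Icc]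
    have : ∀ a : ℤ, (a + 1 + 1 - (a - 1)).toNat = 3 := by intro a; omega
    simp [this]
  have hsub : ball x r ⊆ ⋃ b ∈ S, dyadicIndex k ⁻¹' {b} := by
    intro y hy
    simp only [Set.mem_iUnion]
    refine ⟨dyadicIndex k y, ?_, rfl⟩
    rw [hS, Fintype.mem_piFinset]
    intro i
    have h1 : |y i - x i| < (1 / 2) ^ k := by
      have : |(y - x) i| ≤ ‖y - x‖ := by
        simpa using PiLp.norm_apply_le (y - x) i
      rw [mem_ball, dist_eq_norm] at hy
      simp only [PiLp.sub_apply] at this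
      linarith
    have h2 : |2 ^ k * y i - 2 ^ k * x i| < 1 := by
      rw [← mul_sub, abs_mul, abs_of_pos (by positivity : (0 : ℝ) < 2 ^ k)]
      rw [one_div, inv_pow, ← one_div, lt_div_iff₀ (by positivity)] at h1
      linarith
    rw [abs_lt] at h2
    simp only [dyadicIndex, Finset.mem_Icc]
    constructor
    · rw [Int.le_floor]
      push_cast
      linarith [Int.floor_le ((2 : ℝ) ^ k * x i)]
    · refine Int.lt_add_one_iff.1 (Int.floor_lt.2 ?_)
      push_cast
      linarith [Int.lt_floor_add_one ((2 : ℝ) ^ k * x i)]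
  calc μ (ball x r) ≤ μ (⋃ b ∈ S, dyadicIndex k ⁻¹' {b}) := measure_mono hsub
    _ ≤ ∑ b ∈ S, μ (dyadicIndex k ⁻¹' {b}) := measure_biUnion_finset_le _ _
    _ ≤ ∑ b ∈ S, w := Finset.sum_le_sum fun b _ => h b
    _ = 9 * w := by simp [hcard]

/-- **Frostman's lemma** in the plane. -/
theorem exists_frostmanWith_of_lt_dimH {K : Set (EuclideanSpace ℝ (Fin 2))} (hK : IsCompact K)
    {s : NNReal} (hs : (s : ℝ≥0∞) < dimH K) :
    ∃ μ : Measure (EuclideanSpace ℝ (Fin 2)), IsProbabilityMeasure μ ∧ μ Kᶜ = 0 ∧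
      ∃ C : ℝ, 0 ≤ C ∧ FrostmanWith μ C s := by
  have htop : μH[(s : ℝ)] K = ∞ := hausdorffMeasure_of_lt_dimH hs
  obtain ⟨n, hn⟩ : ∃ n : ℕ, OuterMeasure.mkMetric'.pre
      (fun A : Set (EuclideanSpace ℝ (Fin 2)) => ediam A ^ (s : ℝ)) (n : ℝ≥0∞)⁻¹ K ≠ 0 := by
    by_contra! h
    have h0 : OuterMeasure.mkMetric'
        (fun A : Set (EuclideanSpace ℝ (Fin 2)) => ediam A ^ (s : ℝ)) K = 0 := by
      rw [OuterMeasure.mkMetric'.eq_iSup_nat, OuterMeasure.iSup_apply]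
      simp [h]
    have h1 : μH[(s : ℝ)] K = OuterMeasure.mkMetric'
        (fun A : Set (EuclideanSpace ℝ (Fin 2)) => ediam A ^ (s : ℝ)) K := by
      change Measure.mkMetric (fun r => r ^ (s : ℝ)) K = _
      rw [← OuterMeasure.coe_mkMetric]
      rfl
    rw [h1, h0] at htop
    exact ENNReal.zero_ne_top htop
  set c := OuterMeasure.mkMetric'.pre
      (fun A : Set (EuclideanSpace ℝ (Fin 2)) => ediam A ^ (s : ℝ)) (n : ℝ≥0∞)⁻¹ with hcdef
  set w : ℕ → ℝ≥0∞ := fun k => ENNReal.ofReal (2 * (1 / 2) ^ k) ^ (s : ℝ) with hwdef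
  have hw : ∀ k, w k ≠ ∞ := fun k =>
    ENNReal.rpow_ne_top_of_nonneg s.2 ENNReal.ofReal_ne_top
  have hdiam : ∀ k a, ediam (K ∩ dyadicIndex k ⁻¹' {a}) ≤ ENNReal.ofReal (2 * (1 / 2) ^ k) := by
    intro k a
    refine ediam_le fun x hx y hy => ?_
    rw [edist_dist]
    exact ENNReal.ofReal_le_ofReal (dist_le_of_dyadicIndex_eq (hx.2.trans hy.2.symm))
  obtain ⟨m, hm⟩ : ∃ m : ℕ, ENNReal.ofReal (2 * (1 / 2) ^ m) ≤ (n : ℝ≥0∞)⁻¹ := by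
    have h1 : Filter.Tendsto (fun m : ℕ => ENNReal.ofReal (2 * (1 / 2) ^ m)) Filter.atTop
        (nhds 0) := by
      have := (tendsto_pow_atTop_nhds_zero_of_lt_one (r := (1 / 2 : ℝ)) (by norm_num)
        (by norm_num)).const_mul 2
      simpa using ENNReal.tendsto_ofReal this
    have h2 : (0 : ℝ≥0∞) < (n : ℝ≥0∞)⁻¹ := by simp
    exact (h1.eventually_le_const h2).exists
  have hc : ∀ k, m ≤ k → ∀ a, c (K ∩ dyadicIndex k ⁻¹' {a}) ≤ w k := by
    intro k hk a
    have hle : ENNReal.ofReal (2 * (1 / 2) ^ k) ≤ (n : ℝ≥0∞)⁻¹ := by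
      refine le_trans (ENNReal.ofReal_le_ofReal ?_) hm
      exact mul_le_mul_of_nonneg_left
        (pow_le_pow_of_le_one (by norm_num) (by norm_num) hk) (by norm_num)
    refine (OuterMeasure.mkMetric'.pre_le ((hdiam k a).trans hle)).trans ?_
    exact ENNReal.rpow_le_rpow (hdiam k a) s.2
  obtain ⟨a, ha⟩ : ∃ a, c (K ∩ dyadicIndex m ⁻¹' {a}) ≠ 0 := by
    by_contra! h
    refine hn (le_antisymm ?_ zero_le)
    calc c K ≤ c (⋃ a, K ∩ dyadicIndex m ⁻¹' {a}) :=
          c.mono fun x hx => Set.mem_iUnion.2 ⟨_, hx, rfl⟩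
      _ = 0 := measure_iUnion_null h
  set c₀ := c (K ∩ dyadicIndex m ⁻¹' {a}) with hc₀
  have hc₀top : c₀ ≠ ∞ := ne_top_of_le_ne_top (hw m) (hc m le_rfl a)
  have hπ : ∀ a : Fin 2 → ℤ, ((fun (b : Fin 2 → ℤ) i => b i / 2) ⁻¹' {a}).Finite := by
    intro a
    refine (Set.finite_Icc (fun i => 2 * a i) (fun i => 2 * a i + 1)).subset ?_
    intro b hb
    have hb' : ∀ i, b i / 2 = a i := fun i => congrFun hb i
    constructor <;> intro i <;> have := hb' i <;> simp only <;> omega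
  choose ν hν0 hνc hνb using fun j => exists_measure_cell_le dyadicIndex
    (fun b i => b i / 2) dyadicIndex_eq_div hπ measurableSet_dyadicIndex_preimage c w hw
    hK.measurableSet m hc j m le_rfl a
  have hνK : ∀ j, ν j Kᶜ = 0 := fun j =>
    measure_mono_null (Set.compl_subset_compl.2 Set.inter_subset_left) (hν0 j)
  have hνtop : ∀ j, ν j Set.univ ≠ ∞ := by
    intro j
    refine ne_top_of_le_ne_top (hw m) ?_
    calc ν j Set.univ ≤ ν j (dyadicIndex m ⁻¹' {a}) + ν j (K ∩ dyadicIndex m ⁻¹' {a})ᶜ :=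
          (measure_mono fun x _ => by
            by_cases h : x ∈ dyadicIndex m ⁻¹' {a}
            · exact Or.inl h
            · exact Or.inr fun h' => h h'.2).trans (measure_union_le _ _)
      _ ≤ w m := by simpa [hν0 j] using hνb j m le_rfl (by omega) a
  have hνne : ∀ j, ν j Set.univ ≠ 0 := fun j h => ha (le_antisymm (h ▸ hνc j) zero_le)
  let P : ℕ → ProbabilityMeasure (EuclideanSpace ℝ (Fin 2)) := fun j =>
    ⟨(ν j Set.univ)⁻¹ • ν j, ⟨by
      rw [Measure.smul_apply, smul_eq_mul, ENNReal.inv_mul_cancel (hνne j) (hνtop j)]⟩⟩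
  have hPle : ∀ j A, (P j : Measure (EuclideanSpace ℝ (Fin 2))) A ≤ c₀⁻¹ * ν j A := by
    intro j A
    change (ν j Set.univ)⁻¹ * ν j A ≤ _
    gcongr
    exact hνc j
  have hcomp := isCompact_setOfPred_probabilityMeasure_mass_eq_compl_isCompact_le
    (E := EuclideanSpace ℝ (Fin 2)) (u := fun _ => 0) (K := fun _ => K)
    tendsto_const_nhds (fun _ => hK) (Or.inl inferInstance)
  obtain ⟨μ, hμ, hlim⟩ := hcomp.ultrafilter_le_nhds
    ((Filter.hyperfilter ℕ).map P) (by
      rw [Filter.le_principal_iff, Ultrafilter.coe_map, Filter.mem_map]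
      refine Filter.Eventually.of_forall fun j _ => ?_
      have h1 : (P j : Measure (EuclideanSpace ℝ (Fin 2))) Kᶜ = 0 :=
        le_antisymm ((hPle j _).trans (by simp [hνK j])) zero_le
      simp [ProbabilityMeasure.coeFn_def, h1])
  have htend : Filter.Tendsto P (Filter.hyperfilter ℕ : Filter ℕ) (nhds μ) := hlim
  refine ⟨μ, inferInstance, ?_, 9 * 4 ^ (s : ℝ) / c₀.toReal + (2 ^ m) ^ (s : ℝ), ?_, ?_⟩
  · simpa [ProbabilityMeasure.coeFn_def, ENNReal.toNNReal_eq_zero_iff] using hμ 0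
  · positivity
  intro x r hr
  have hc₀pos : 0 < c₀.toReal := ENNReal.toReal_pos ha hc₀top
  by_cases hrm : r ≤ (1 / 2) ^ m
  · obtain ⟨l, hl1, hl2⟩ := exists_nat_pow_near_of_lt_one hr
      (hrm.trans (pow_le_one₀ (by norm_num) (by norm_num))) (by norm_num : (0 : ℝ) < 1 / 2)
      (by norm_num)
    have hml : m ≤ l := by
      by_contra! h
      have : ((1 : ℝ) / 2) ^ m ≤ (1 / 2) ^ (l + 1) :=
        pow_le_pow_of_le_one (by norm_num) (by norm_num) h
      linarith
    have hev : ∀ᶠ j in (Filter.hyperfilter ℕ : Filter ℕ),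
        (P j : Measure (EuclideanSpace ℝ (Fin 2))) (ball x r) ≤ 9 * (c₀⁻¹ * w l) := by
      have : ∀ᶠ j : ℕ in (Filter.hyperfilter ℕ : Filter ℕ), l - m ≤ j :=
        Nat.hyperfilter_le_atTop (Filter.eventually_ge_atTop (l - m))
      filter_upwards [this] with j hj
      refine measure_ball_le_of_dyadicIndex (fun b => ?_) x hl2
      exact (hPle j _).trans (by gcongr; exact hνb j l hml (by omega) b)
    have h1 : (μ : Measure (EuclideanSpace ℝ (Fin 2))) (ball x r) ≤ 9 * (c₀⁻¹ * w l) :=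
      (ProbabilityMeasure.le_liminf_measure_open_of_tendsto htend isOpen_ball).trans
        (Filter.liminf_le_of_frequently_le' hev.frequently)
    refine h1.trans ?_
    have h2 : w l ≤ ENNReal.ofReal ((4 * r) ^ (s : ℝ)) := by
      change ENNReal.ofReal (2 * (1 / 2) ^ l) ^ (s : ℝ) ≤ _
      rw [ENNReal.ofReal_rpow_of_pos (by positivity)]
      refine ENNReal.ofReal_le_ofReal (Real.rpow_le_rpow (by positivity) ?_ s.2)
      rw [pow_succ] at hl1
      linarith
    have h3 : c₀⁻¹ = ENNReal.ofReal (c₀.toReal⁻¹) := by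
      rw [ENNReal.ofReal_inv_of_pos hc₀pos, ENNReal.ofReal_toReal hc₀top]
    calc 9 * (c₀⁻¹ * w l)
        ≤ ENNReal.ofReal 9 * (ENNReal.ofReal (c₀.toReal⁻¹) *
            ENNReal.ofReal ((4 * r) ^ (s : ℝ))) := by
          rw [h3]
          gcongr
          simp
      _ = ENNReal.ofReal (9 * 4 ^ (s : ℝ) / c₀.toReal * r ^ (s : ℝ)) := by
          rw [← ENNReal.ofReal_mul (by positivity), ← ENNReal.ofReal_mul (by positivity),
            Real.mul_rpow (by norm_num) hr.le]
          congr 1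
          field_simp
      _ ≤ _ := by
          refine ENNReal.ofReal_le_ofReal ?_
          have : 0 ≤ ((2 : ℝ) ^ m) ^ (s : ℝ) * r ^ (s : ℝ) := by positivity
          linarith
  · push Not at hrm
    refine prob_le_one.trans (ENNReal.one_le_ofReal.2 ?_)
    have h1 : 1 ≤ 2 ^ m * r := by
      rw [one_div, inv_pow, inv_lt_iff_one_lt_mul₀ (by positivity)] at hrm
      linarith
    have h2 : 1 ≤ ((2 : ℝ) ^ m) ^ (s : ℝ) * r ^ (s : ℝ) := by
      rw [← Real.mul_rpow (by positivity) hr.le]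
      exact Real.one_le_rpow h1 s.2
    have h3 : 0 ≤ 9 * 4 ^ (s : ℝ) / c₀.toReal * r ^ (s : ℝ) := by positivity
    linarith

theorem sq_lintegral_mul_le {X : Type*} [MeasurableSpace X] {μ : Measure X} {f g : X → ℝ≥0∞}
    (hf : AEMeasurable f μ) (hg : AEMeasurable g μ) :
    (∫⁻ x, f x * g x ∂μ) ^ 2 ≤ (∫⁻ x, f x ^ 2 ∂μ) * ∫⁻ x, g x ^ 2 ∂μ := by
  have h := ENNReal.lintegral_mul_le_Lp_mul_Lq μ Real.HolderConjugate.two_two hf hg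
  calc (∫⁻ x, f x * g x ∂μ) ^ 2
      ≤ ((∫⁻ x, f x ^ (2 : ℝ) ∂μ) ^ (1 / 2 : ℝ) * (∫⁻ x, g x ^ (2 : ℝ) ∂μ) ^ (1 / 2 : ℝ)) ^ 2 := by
        gcongr
        simpa using h
    _ = (∫⁻ x, f x ^ 2 ∂μ) * ∫⁻ x, g x ^ 2 ∂μ := by
        rw [mul_pow, ← ENNReal.rpow_natCast, ← ENNReal.rpow_natCast, ← ENNReal.rpow_mul,
          ← ENNReal.rpow_mul]
        norm_num

/-- The constant in the Gaussian average of a measure with `r ^ p` growth. -/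
noncomputable def gaussianSum (p : ℝ) : ℝ := ∑' k : ℕ, Real.exp (-(k : ℝ) ^ 2) * ((k : ℝ) + 1) ^ p

theorem gaussianSum_nonneg (p : ℝ) : 0 ≤ gaussianSum p := tsum_nonneg fun _ => by positivity

theorem summable_gaussianSum (p : ℝ) :
    Summable fun k : ℕ => Real.exp (-(k : ℝ) ^ 2) * ((k : ℝ) + 1) ^ p := by
  have h := (summable_nat_add_iff 1).2
    (Real.summable_pow_mul_exp_neg_nat_mul ⌈p⌉₊ (r := 1) one_pos)
  refine Summable.of_nonneg_of_le (fun k => by positivity) (fun k => ?_)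
    (h.mul_left (Real.exp 1))
  have h1 : ((k : ℝ) + 1) ^ p ≤ ((k : ℝ) + 1) ^ ⌈p⌉₊ := by
    rw [← Real.rpow_natCast]
    exact Real.rpow_le_rpow_of_exponent_le (by linarith [k.cast_nonneg (α := ℝ)])
      (Nat.le_ceil p)
  have h2 : Real.exp (-(k : ℝ) ^ 2) ≤ Real.exp 1 * Real.exp (-1 * ((k : ℝ) + 1)) := by
    rw [← Real.exp_add]
    refine Real.exp_le_exp.2 ?_
    have : (k : ℝ) ≤ (k : ℝ) ^ 2 := by
      rcases Nat.eq_zero_or_pos k with rfl | hk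
      · simp
      · have : (1 : ℝ) ≤ k := by exact_mod_cast hk
        nlinarith
    linarith
  push_cast
  calc Real.exp (-(k : ℝ) ^ 2) * ((k : ℝ) + 1) ^ p
      ≤ (Real.exp 1 * Real.exp (-1 * ((k : ℝ) + 1))) * ((k : ℝ) + 1) ^ ⌈p⌉₊ := by gcongr
    _ = _ := by ring

theorem lintegral_exp_neg_sq_le {X : Type*} [MeasurableSpace X] {μ : Measure X} {u : X → ℝ}
    (hu : Measurable u) (hu0 : ∀ x, 0 ≤ u x) {C p : ℝ} (hC : 0 ≤ C)
    (hμ : ∀ r, 0 < r → μ {x | u x < r} ≤ ENNReal.ofReal (C * r ^ p)) {a : ℝ} (ha : 0 < a) :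
    ∫⁻ x, ENNReal.ofReal (Real.exp (-(a * u x) ^ 2)) ∂μ ≤
      ENNReal.ofReal (C * gaussianSum p * a ^ (-p)) := by
  have hset : ∀ k : ℕ, MeasurableSet {x | u x < ((k : ℝ) + 1) / a} := fun k =>
    measurableSet_lt hu measurable_const
  calc ∫⁻ x, ENNReal.ofReal (Real.exp (-(a * u x) ^ 2)) ∂μ
      ≤ ∫⁻ x, ∑' k : ℕ, {x | u x < ((k : ℝ) + 1) / a}.indicator
          (fun _ => ENNReal.ofReal (Real.exp (-(k : ℝ) ^ 2))) x ∂μ := by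
        refine lintegral_mono fun x => ?_
        have h0 : 0 ≤ a * u x := mul_nonneg ha.le (hu0 x)
        refine le_trans ?_ (ENNReal.le_tsum ⌊a * u x⌋₊)
        rw [Set.indicator_of_mem]
        · refine ENNReal.ofReal_le_ofReal (Real.exp_le_exp.2 (neg_le_neg ?_))
          exact pow_le_pow_left₀ (Nat.cast_nonneg _) (Nat.floor_le h0) 2
        · rw [Set.mem_ofPred_eq, lt_div_iff₀ ha]
          linarith [Nat.lt_floor_add_one (a * u x)]
    _ = ∑' k : ℕ, ENNReal.ofReal (Real.exp (-(k : ℝ) ^ 2)) * μ {x | u x < ((k : ℝ) + 1) / a} := by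
        rw [lintegral_tsum fun k => (measurable_const.indicator (hset k)).aemeasurable]
        congr 1
        funext k
        rw [lintegral_indicator_const (hset k)]
    _ ≤ ∑' k : ℕ, ENNReal.ofReal
          (C * a ^ (-p) * (Real.exp (-(k : ℝ) ^ 2) * ((k : ℝ) + 1) ^ p)) := by
        refine ENNReal.tsum_le_tsum fun k => ?_
        have hk : (0 : ℝ) < (k : ℝ) + 1 := by positivity
        calc _ ≤ ENNReal.ofReal (Real.exp (-(k : ℝ) ^ 2)) *
              ENNReal.ofReal (C * (((k : ℝ) + 1) / a) ^ p) := by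
                gcongr
                exact hμ _ (by positivity)
          _ = _ := by
            rw [← ENNReal.ofReal_mul (by positivity), Real.div_rpow hk.le ha.le,
              Real.rpow_neg ha.le]
            congr 1
            ring
    _ = ENNReal.ofReal (C * gaussianSum p * a ^ (-p)) := by
        rw [← ENNReal.ofReal_tsum_of_nonneg (fun k => by positivity)
          ((summable_gaussianSum p).mul_left _), tsum_mul_left]
        congr 1
        rw [gaussianSum]
        ring

theorem FrostmanWith.lintegral_exp_neg_sq_dist_le {X : Type*} [PseudoMetricSpace X]
    [SecondCountableTopology X] [MeasurableSpace X] [OpensMeasurableSpace X] {μ : Measure X}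
    {C s : ℝ} (h : FrostmanWith μ C s) (hC : 0 ≤ C) {a : ℝ} (ha : 0 < a) (x : X) :
    ∫⁻ y, ENNReal.ofReal (Real.exp (-(a * dist y x) ^ 2)) ∂μ ≤
      ENNReal.ofReal (C * gaussianSum s * a ^ (-s)) :=
  lintegral_exp_neg_sq_le (measurable_id.dist measurable_const) (fun _ => dist_nonneg) hC
    (fun r hr => h x r hr) ha

section Gaussian

variable {V : Type*} [NormedAddCommGroup V] [InnerProductSpace ℝ V] [FiniteDimensional ℝ V]
  [MeasurableSpace V] [BorelSpace V]

theorem integrable_exp_neg_mul_sq_norm {b : ℝ} (hb : 0 < b) :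
    Integrable (fun v : V => Real.exp (-b * ‖v‖ ^ 2)) := by
  have h := GaussianFourier.integrable_cexp_neg_mul_sq_norm_add (b := (b : ℂ))
    (by simpa using hb) 0 (0 : V)
  refine h.norm.congr (Filter.Eventually.of_forall fun v => ?_)
  simp only [Complex.norm_exp]
  congr 1
  simp [← Complex.ofReal_pow, ← Complex.ofReal_mul]

variable (V) in
/-- The unnormalised Gaussian measure with density `exp (-b ‖v‖ ^ 2)`. -/
noncomputable def gaussianWeight (b : ℝ) : Measure V :=
  volume.withDensity fun v => ENNReal.ofReal (Real.exp (-b * ‖v‖ ^ 2))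

theorem isFiniteMeasure_gaussianWeight {b : ℝ} (hb : 0 < b) :
    IsFiniteMeasure (gaussianWeight V b) :=
  isFiniteMeasure_withDensity_ofReal (integrable_exp_neg_mul_sq_norm hb).2

theorem lintegral_gaussianWeight (b : ℝ) {f : V → ℝ≥0∞} (hf : Measurable f) :
    ∫⁻ v, f v ∂gaussianWeight V b =
      ∫⁻ v, ENNReal.ofReal (Real.exp (-b * ‖v‖ ^ 2)) * f v := by
  rw [gaussianWeight, lintegral_withDensity_eq_lintegral_mul _ (by fun_prop) hf]
  rfl

theorem charFun_gaussianWeight {b : ℝ} (hb : 0 < b) (y : V) :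
    charFun (gaussianWeight V b) y =
      ((Real.pi / b) ^ (Module.finrank ℝ V / 2 : ℝ) * Real.exp (-‖y‖ ^ 2 / (4 * b)) : ℝ) := by
  have h := GaussianFourier.integral_cexp_neg_mul_sq_norm_add (b := (b : ℂ))
    (by simpa using hb) Complex.I y
  rw [charFun_apply, gaussianWeight,
    integral_withDensity_eq_integral_toReal_smul (by fun_prop) (by simp)]
  refine Eq.trans (integral_congr_ae (Filter.Eventually.of_forall fun v => ?_)) (h.trans ?_)
  · simp only [ENNReal.toReal_ofReal (Real.exp_nonneg _), Complex.real_smul, Complex.ofReal_exp]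
    rw [← Complex.exp_add, real_inner_comm]
    congr 1
    push_cast
    ring
  · push_cast
    rw [Complex.ofReal_cpow (by positivity)]
    push_cast
    congr 2
    rw [Complex.I_sq]
    ring

theorem integral_charFun_add {μ γ : Measure V} [IsFiniteMeasure μ] [IsFiniteMeasure γ] (ξ : V) :
    ∫ w, charFun μ (ξ + w) ∂γ = ∫ y, Complex.exp (⟪y, ξ⟫ * Complex.I) * charFun γ y ∂μ := by
  simp only [charFun_apply]
  rw [integral_integral_swap]
  · refine integral_congr_ae (Filter.Eventually.of_forall fun y => ?_)
    simp only
    rw [← integral_const_mul]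
    refine integral_congr_ae (Filter.Eventually.of_forall fun w => ?_)
    simp only
    rw [← Complex.exp_add, inner_add_right, real_inner_comm y w]
    push_cast
    ring_nf
  · refine Integrable.of_bound (C := 1) (Continuous.aestronglyMeasurable ?_)
      (Filter.Eventually.of_forall fun z => ?_)
    · simp only [Function.uncurry_def]
      fun_prop
    · simp [Function.uncurry, Complex.norm_exp]

theorem lintegral_sq_charFun_gaussianWeight {μ : Measure V} [IsFiniteMeasure μ] {b : ℝ}
    (hb : 0 < b) :
    ∫⁻ t, ENNReal.ofReal (Real.exp (-b * ‖t‖ ^ 2)) * ‖charFun μ t‖ₑ ^ 2 =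
      ENNReal.ofReal ((Real.pi / b) ^ (Module.finrank ℝ V / 2 : ℝ)) *
        ∫⁻ x, ∫⁻ y, ENNReal.ofReal (Real.exp (-dist y x ^ 2 / (4 * b))) ∂μ ∂μ := by
  have := isFiniteMeasure_gaussianWeight (V := V) hb
  have hms : Measurable fun t => ‖charFun μ t‖ₑ ^ 2 := measurable_charFun.enorm.pow_const 2
  set ρ : Measure V := μ.map (fun x => (-1 : ℝ) • x) with hρ
  have : IsFiniteMeasure ρ := by rw [hρ]; infer_instance
  set κ := (Real.pi / b) ^ (Module.finrank ℝ V / 2 : ℝ) with hκ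
  have hκ0 : 0 ≤ κ := by positivity
  have hchar : ∀ t, charFun (Measure.conv ρ μ) t = ((‖charFun μ t‖ ^ 2 : ℝ) : ℂ) := by
    intro t
    rw [charFun_conv, hρ, charFun_map_smul, neg_one_smul, charFun_neg,
      ← Complex.normSq_eq_conj_mul_self, Complex.normSq_eq_norm_sq]
  have hswap := integral_charFun_add (μ := Measure.conv ρ μ) (γ := gaussianWeight V b) 0
  simp only [zero_add, hchar, charFun_gaussianWeight hb, inner_zero_right, Complex.ofReal_zero,
    zero_mul, Complex.exp_zero, one_mul, integral_complex_ofReal, Complex.ofReal_inj, ← hκ] at hswap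
  rw [← lintegral_gaussianWeight b hms]
  have h1 : ∫⁻ t, ‖charFun μ t‖ₑ ^ 2 ∂gaussianWeight V b =
      ENNReal.ofReal (∫ t, ‖charFun μ t‖ ^ 2 ∂gaussianWeight V b) := by
    rw [ofReal_integral_eq_lintegral_ofReal]
    · refine lintegral_congr fun t => ?_
      rw [ENNReal.ofReal_pow (norm_nonneg _), ofReal_norm]
    · refine Integrable.of_bound (C := μ.real Set.univ ^ 2)
        (measurable_charFun.norm.pow_const 2).aestronglyMeasurable
        (Filter.Eventually.of_forall fun t => ?_)
      rw [Real.norm_of_nonneg (by positivity)]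
      exact pow_le_pow_left₀ (norm_nonneg _) (norm_charFun_le t) 2
    · exact Filter.Eventually.of_forall fun t => by positivity
  rw [h1, hswap, ofReal_integral_eq_lintegral_ofReal]
  · simp only [ENNReal.ofReal_mul hκ0]
    rw [lintegral_const_mul _ (by fun_prop), Measure.lintegral_conv (by fun_prop), hρ,
      lintegral_map (by fun_prop) (by fun_prop)]
    congr 1
    refine lintegral_congr fun x => lintegral_congr fun y => ?_
    rw [dist_eq_norm, neg_one_smul, neg_add_eq_sub]
  · refine Integrable.of_bound (C := κ) (Continuous.aestronglyMeasurable (by fun_prop))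
        (Filter.Eventually.of_forall fun t => ?_)
    rw [Real.norm_of_nonneg (by positivity)]
    refine mul_le_of_le_one_right hκ0 (Real.exp_le_one_iff.2 ?_)
    rw [neg_div]
    exact neg_nonpos.2 (by positivity)
  · exact Filter.Eventually.of_forall fun t => by positivity

end Gaussian

theorem FrostmanWith.exists_measure_tube_le {μ : Measure (EuclideanSpace ℝ (Fin 2))}
    [IsProbabilityMeasure μ] {C s : ℝ} (h : FrostmanWith μ C s) (hC : 0 ≤ C) (hs : 1 ≤ s)
    {c ρ : ℝ} (hc : 0 < c) (hμ : ∀ᵐ y ∂μ, ‖y‖ ≤ ρ) :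
    ∃ C', 0 ≤ C' ∧ ∀ x : EuclideanSpace ℝ (Fin 2), c ≤ ‖x‖ → ‖x‖ ≤ ρ → ∀ τ r : ℝ, 0 < r →
      μ {y | |⟪x, y⟫ - τ| < r} ≤ ENNReal.ofReal (C' * r ^ (s - 1)) := by
  refine ⟨1 + (2 * ρ ^ 2 + 5) * C * (2 / c) ^ s, by positivity, fun x hxc hxρ τ r hr => ?_⟩
  have hxn : 0 < ‖x‖ := hc.trans_le hxc
  have hA : 0 ≤ (2 * ρ ^ 2 + 5) * C * (2 / c) ^ s := by positivity
  rcases lt_or_ge 1 r with hr1 | hr1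
  · refine prob_le_one.trans ?_
    rw [← ENNReal.ofReal_one]
    refine ENNReal.ofReal_le_ofReal ?_
    have : 1 ≤ r ^ (s - 1) := Real.one_le_rpow hr1.le (by linarith)
    nlinarith
  set N : ℕ := ⌈ρ ^ 2 / r⌉₊ + 1 with hN
  have hNle : (N : ℝ) ≤ ρ ^ 2 / r + 2 := by
    have := (Nat.ceil_lt_add_one (by positivity : 0 ≤ ρ ^ 2 / r)).le
    push_cast [hN]
    linarith
  set xperp : EuclideanSpace ℝ (Fin 2) := !₂[-x 1, x 0] with hperp
  have hin : ∀ u v : EuclideanSpace ℝ (Fin 2), ⟪u, v⟫ = u 0 * v 0 + u 1 * v 1 := fun u v => by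
    simp [PiLp.inner_apply, Fin.sum_univ_two, mul_comm]
  have hnorm : ∀ v : EuclideanSpace ℝ (Fin 2), ‖v‖ ^ 2 = v 0 ^ 2 + v 1 ^ 2 := fun v => by
    simp [EuclideanSpace.norm_sq_eq, Fin.sum_univ_two]
  have hpyth : ∀ v, ⟪x, v⟫ ^ 2 + ⟪xperp, v⟫ ^ 2 = ‖x‖ ^ 2 * ‖v‖ ^ 2 := fun v => by
    rw [hin, hin, hnorm, hnorm]
    simp [hperp]
    ring
  have hxx : ⟪x, x⟫ = ‖x‖ ^ 2 := real_inner_self_eq_norm_sq x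
  have hperp_x : ⟪xperp, x⟫ = 0 := by rw [hin]; simp [hperp]; ring
  have hx_perp : ⟪x, xperp⟫ = 0 := by rw [real_inner_comm, hperp_x]
  have hperp_perp : ⟪xperp, xperp⟫ = ‖x‖ ^ 2 := by rw [hin, hnorm]; simp [hperp]; ring
  let p : ℤ → EuclideanSpace ℝ (Fin 2) := fun j =>
    (τ / ‖x‖ ^ 2) • x + (j * r / ‖x‖ ^ 2) • xperp
  have hp1 : ∀ j, ⟪x, p j⟫ = τ := fun j => by
    simp only [p, inner_add_right, real_inner_smul_right, hxx, hx_perp]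
    field_simp
    ring
  have hp2 : ∀ j, ⟪xperp, p j⟫ = j * r := fun j => by
    simp only [p, inner_add_right, real_inner_smul_right, hperp_x, hperp_perp]
    field_simp
    ring
  have hcover : ∀ᵐ y ∂μ, y ∈ {y | |⟪x, y⟫ - τ| < r} →
      y ∈ ⋃ j ∈ Finset.Icc (-(N : ℤ)) N, ball (p j) (2 * r / c) := by
    filter_upwards [hμ] with y hy hyt
    have hyt' : |⟪x, y⟫ - τ| < r := hyt
    have hb : |⟪xperp, y⟫| ≤ ρ ^ 2 := by
      have h1 : ⟪xperp, y⟫ ^ 2 ≤ (‖x‖ * ‖y‖) ^ 2 := by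
        rw [mul_pow, ← hpyth y]
        nlinarith [sq_nonneg ⟪x, y⟫]
      have h2 := abs_le_of_sq_le_sq h1 (by positivity)
      refine h2.trans ?_
      rw [sq]
      gcongr
      exact hxn.le.trans hxρ
    set j : ℤ := ⌊⟪xperp, y⟫ / r⌋ with hj
    have hj1 : (j : ℝ) * r ≤ ⟪xperp, y⟫ := (le_div_iff₀ hr).1 (Int.floor_le _)
    have hj2 : ⟪xperp, y⟫ < (j + 1 : ℝ) * r := (div_lt_iff₀ hr).1 (Int.lt_floor_add_one _)
    have hjN : j ∈ Finset.Icc (-(N : ℤ)) N := by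
      have hc1 := Nat.le_ceil (ρ ^ 2 / r)
      rw [abs_le] at hb
      have h3 : -(ρ ^ 2 / r) ≤ ⟪xperp, y⟫ / r := by
        rw [← neg_div]; gcongr; exact hb.1
      have h4 : ⟪xperp, y⟫ / r ≤ ρ ^ 2 / r := by gcongr; exact hb.2
      have h5 := Int.floor_le (⟪xperp, y⟫ / r)
      have h6 := Int.lt_floor_add_one (⟪xperp, y⟫ / r)
      rw [Finset.mem_Icc]
      constructor
      · rw [← Int.cast_le (R := ℝ)]
        push_cast [hN]
        linarith
      · rw [← Int.cast_le (R := ℝ)]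
        push_cast [hN]
        linarith
    refine Set.mem_biUnion hjN ?_
    rw [mem_ball, dist_eq_norm, lt_div_iff₀ hc]
    have h7 := hpyth (y - p j)
    rw [inner_sub_right, inner_sub_right, hp1, hp2] at h7
    have h8 : (⟪x, y⟫ - τ) ^ 2 ≤ r ^ 2 := sq_le_sq' (abs_lt.1 hyt').1.le (abs_lt.1 hyt').2.le
    have h9 : (⟪xperp, y⟫ - j * r) ^ 2 ≤ r ^ 2 := sq_le_sq' (by linarith) (by linarith)
    have h10 : ‖x‖ * ‖y - p j‖ < 2 * r := by
      refine lt_of_pow_lt_pow_left₀ 2 (by positivity) ?_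
      rw [mul_pow, ← h7]
      nlinarith [sq_pos_of_pos hr]
    calc ‖y - p j‖ * c ≤ ‖y - p j‖ * ‖x‖ := by gcongr
      _ < 2 * r := by linarith
  calc μ {y | |⟪x, y⟫ - τ| < r}
      ≤ μ (⋃ j ∈ Finset.Icc (-(N : ℤ)) N, ball (p j) (2 * r / c)) := measure_mono_ae hcover
    _ ≤ ∑ j ∈ Finset.Icc (-(N : ℤ)) N, μ (ball (p j) (2 * r / c)) := measure_biUnion_finset_le _ _
    _ ≤ ∑ j ∈ Finset.Icc (-(N : ℤ)) N, ENNReal.ofReal (C * (2 * r / c) ^ s) :=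
        Finset.sum_le_sum fun j _ => h _ _ (by positivity)
    _ = ENNReal.ofReal ((2 * N + 1) * (C * (2 * r / c) ^ s)) := by
        rw [Finset.sum_const, Int.card_Icc, nsmul_eq_mul,
          show ((N : ℤ) + 1 - -(N : ℤ)).toNat = 2 * N + 1 by omega,
          show (2 * (N : ℝ) + 1) = ((2 * N + 1 : ℕ) : ℝ) by push_cast; ring,
          ENNReal.ofReal_mul (Nat.cast_nonneg _), ENNReal.ofReal_natCast]
    _ ≤ ENNReal.ofReal ((1 + (2 * ρ ^ 2 + 5) * C * (2 / c) ^ s) * r ^ (s - 1)) := by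
        refine ENNReal.ofReal_le_ofReal ?_
        have h11 : (2 * (N : ℝ) + 1) ≤ (2 * ρ ^ 2 + 5) / r := by
          rw [le_div_iff₀ hr]
          calc (2 * (N : ℝ) + 1) * r ≤ (2 * (ρ ^ 2 / r + 2) + 1) * r := by gcongr
            _ = 2 * ρ ^ 2 + 5 * r := by field_simp; ring
            _ ≤ _ := by linarith
        have h12 : (2 * r / c) ^ s = (2 / c) ^ s * (r * r ^ (s - 1)) := by
          rw [mul_div_right_comm, Real.mul_rpow (by positivity) hr.le, Real.rpow_sub_one hr.ne']
          field_simp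
        have h13 : 0 ≤ r ^ (s - 1) := by positivity
        calc (2 * (N : ℝ) + 1) * (C * (2 * r / c) ^ s)
            ≤ (2 * ρ ^ 2 + 5) / r * (C * (2 * r / c) ^ s) := by gcongr
          _ = (2 * ρ ^ 2 + 5) * C * (2 / c) ^ s * r ^ (s - 1) := by
            rw [h12]
            field_simp
          _ ≤ _ := by nlinarith

/-- On rays, the Fourier transform of a Frostman measure is controlled by its tubes. -/
theorem FrostmanWith.exists_lintegral_sq_charFun_smul_le
    {μ : Measure (EuclideanSpace ℝ (Fin 2))} [IsProbabilityMeasure μ] {C s : ℝ}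
    (h : FrostmanWith μ C s) (hC : 0 ≤ C) (hs : 1 ≤ s)
    {c ρ : ℝ} (hc : 0 < c) (hμ : ∀ᵐ y ∂μ, ‖y‖ ≤ ρ) :
    ∃ C', 0 ≤ C' ∧ ∀ x : EuclideanSpace ℝ (Fin 2), c ≤ ‖x‖ → ‖x‖ ≤ ρ → ∀ R : ℝ, 0 < R →
      ∫⁻ t : ℝ, ENNReal.ofReal (Real.exp (-(R ^ 2)⁻¹ * ‖t‖ ^ 2)) * ‖charFun μ (t • x)‖ₑ ^ 2 ≤
        ENNReal.ofReal (C' * R ^ (2 - s)) := by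
  obtain ⟨C₁, hC₁, htube⟩ := h.exists_measure_tube_le hC hs hc hμ
  have hg := gaussianSum_nonneg (s - 1)
  refine ⟨Real.pi ^ (1 / 2 : ℝ) * (C₁ * gaussianSum (s - 1) * (1 / 2) ^ (-(s - 1))),
    by positivity, fun x hxc hxρ R hR => ?_⟩
  have hin : Measurable fun y : EuclideanSpace ℝ (Fin 2) => ⟪x, y⟫ := by fun_prop
  have hmap : ∀ t : ℝ, charFun (μ.map fun y => ⟪x, y⟫) t = charFun μ (t • x) := fun t => by
    rw [charFun_apply_real, charFun_apply, integral_map hin.aemeasurable (by fun_prop)]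
    refine integral_congr_ae (Filter.Eventually.of_forall fun y => ?_)
    simp only [real_inner_smul_right, real_inner_comm]
    push_cast
    rfl
  simp only [← hmap]
  rw [lintegral_sq_charFun_gaussianWeight (by positivity)]
  have hinner : ∀ τ : ℝ, ∫⁻ u, ENNReal.ofReal (Real.exp (-dist u τ ^ 2 / (4 * (R ^ 2)⁻¹)))
      ∂(μ.map fun y => ⟪x, y⟫) ≤
      ENNReal.ofReal (C₁ * gaussianSum (s - 1) * (R / 2) ^ (-(s - 1))) := fun τ => by
    rw [lintegral_map (by fun_prop) hin]
    have := lintegral_exp_neg_sq_le (μ := μ) (u := fun y => |⟪x, y⟫ - τ|) (by fun_prop)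
      (fun _ => abs_nonneg _) hC₁ (fun r hr => htube x hxc hxρ τ r hr) (a := R / 2) (by positivity)
    refine le_trans (le_of_eq (lintegral_congr fun y => ?_)) this
    rw [Real.dist_eq]
    congr 2
    field_simp
    ring
  have hprob : IsProbabilityMeasure (μ.map fun y => ⟪x, y⟫) :=
    Measure.isProbabilityMeasure_map hin.aemeasurable
  calc _ ≤ ENNReal.ofReal ((Real.pi / (R ^ 2)⁻¹) ^ (Module.finrank ℝ ℝ / 2 : ℝ)) *
        ∫⁻ _τ, ENNReal.ofReal (C₁ * gaussianSum (s - 1) * (R / 2) ^ (-(s - 1)))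
          ∂(μ.map fun y => ⟪x, y⟫) := by
          gcongr
          exact hinner _
    _ = _ := by
      rw [lintegral_const, measure_univ, mul_one, ← ENNReal.ofReal_mul (by positivity)]
      congr 1
      rw [Module.finrank_self, Nat.cast_one, div_inv_eq_mul, Real.mul_rpow (by positivity)
        (by positivity), ← Real.sqrt_eq_rpow (R ^ 2), Real.sqrt_sq hR.le,
        show R / 2 = R * (1 / 2) by ring, Real.mul_rpow hR.le (by norm_num),
        show 2 - s = 1 + -(s - 1) by ring, Real.rpow_add hR, Real.rpow_one]
      ring

/-- The measure whose Gaussian damping is `ν`. -/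
noncomputable def gaussianTilt {V : Type*} [NormedAddCommGroup V] [MeasurableSpace V]
    (ν : Measure V) : Measure V :=
  ν.withDensity fun y => ENNReal.ofReal (Real.exp (‖y‖ ^ 2 / 4))

theorem gaussianTilt_le {V : Type*} [NormedAddCommGroup V] [MeasurableSpace V]
    {ν : Measure V} {ρ : ℝ} (hν : ∀ᵐ y ∂ν, ‖y‖ ≤ ρ) :
    gaussianTilt ν ≤ ENNReal.ofReal (Real.exp (ρ ^ 2 / 4)) • ν := by
  rw [gaussianTilt, ← withDensity_const]
  refine withDensity_mono ?_
  filter_upwards [hν] with y hy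
  gcongr

theorem exp_neg_sq_norm_sub_smul_le {V : Type*} [NormedAddCommGroup V]
    [NormedSpace ℝ V] {x η : V} {t ρ : ℝ} (ht : 1 ≤ t) (hx : ‖x‖ ≤ ρ) :
    Real.exp (-‖η - t • x‖ ^ 2) ≤ Real.exp (ρ ^ 2 / 2) *
      (Real.exp (-(4 * t ^ 2)⁻¹ * ‖η‖ ^ 2) *
        Real.exp (-(t / Real.sqrt 2 * dist x (t⁻¹ • η)) ^ 2)) := by
  have ht0 : 0 < t := by linarith
  have hd : t * dist x (t⁻¹ • η) = ‖η - t • x‖ := by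
    rw [dist_eq_norm, ← norm_neg (η - t • x), neg_sub]
    nth_rw 1 [← Real.norm_of_nonneg ht0.le]
    rw [← norm_smul, smul_sub, smul_inv_smul₀ ht0.ne']
  have h1 : (t / Real.sqrt 2 * dist x (t⁻¹ • η)) ^ 2 = ‖η - t • x‖ ^ 2 / 2 := by
    rw [div_mul_eq_mul_div, hd, div_pow, Real.sq_sqrt (by norm_num)]
  rw [← Real.exp_add, ← Real.exp_add, h1]
  refine Real.exp_le_exp.2 ?_
  have h2 : ‖η‖ ≤ ‖η - t • x‖ + t * ρ := by
    calc ‖η‖ = ‖(η - t • x) + t • x‖ := by rw [sub_add_cancel]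
      _ ≤ ‖η - t • x‖ + ‖t • x‖ := norm_add_le _ _
      _ ≤ _ := by
        rw [norm_smul, Real.norm_of_nonneg ht0.le]
        gcongr
  have h3 : ‖η‖ ^ 2 ≤ 2 * ‖η - t • x‖ ^ 2 + 2 * (t ^ 2 * ρ ^ 2) := by
    nlinarith [norm_nonneg η, sq_nonneg (‖η - t • x‖ - t * ρ), norm_nonneg (η - t • x),
      pow_le_pow_left₀ (norm_nonneg η) h2 2]
  have h4 : (4 * t ^ 2)⁻¹ * ‖η‖ ^ 2 ≤ ‖η - t • x‖ ^ 2 / 2 + ρ ^ 2 / 2 := by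
    rw [inv_mul_le_iff₀ (by positivity)]
    have : ‖η - t • x‖ ^ 2 ≤ t ^ 2 * ‖η - t • x‖ ^ 2 :=
      le_mul_of_one_le_left (by positivity) (by nlinarith)
    nlinarith
  linarith

section Smoothing

variable {V : Type*} [NormedAddCommGroup V] [InnerProductSpace ℝ V] [FiniteDimensional ℝ V]
  [MeasurableSpace V] [BorelSpace V]

theorem integral_charFun_gaussianTilt {ν : Measure V} [IsFiniteMeasure ν]
    [IsFiniteMeasure (gaussianTilt ν)] (ξ : V) :
    ∫ w, charFun (gaussianTilt ν) (ξ + w) ∂gaussianWeight V 1 =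
      ((Real.pi ^ (Module.finrank ℝ V / 2 : ℝ) : ℝ) : ℂ) * charFun ν ξ := by
  have := isFiniteMeasure_gaussianWeight (V := V) one_pos
  rw [integral_charFun_add, charFun_apply, ← integral_const_mul]
  conv_lhs => rw [gaussianTilt]
  rw [integral_withDensity_eq_integral_toReal_smul (by fun_prop) (by simp)]
  refine integral_congr_ae (Filter.Eventually.of_forall fun y => ?_)
  simp only [charFun_gaussianWeight one_pos, ENNReal.toReal_ofReal (Real.exp_nonneg _),
    Complex.real_smul, div_one, mul_one]
  have h : Real.exp (‖y‖ ^ 2 / 4) * Real.exp (-‖y‖ ^ 2 / 4) = 1 := by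
    rw [← Real.exp_add, neg_div, add_neg_cancel, Real.exp_zero]
  have h' : (Real.exp (‖y‖ ^ 2 / 4) : ℂ) * (Real.exp (-‖y‖ ^ 2 / 4) : ℂ) = 1 := by
    exact_mod_cast h
  push_cast at h' ⊢
  linear_combination (Complex.exp (⟪y, ξ⟫ * Complex.I) *
    ((Real.pi ^ (Module.finrank ℝ V / 2 : ℝ) : ℝ) : ℂ)) * h'

theorem sq_enorm_charFun_le {ν : Measure V} [IsFiniteMeasure ν]
    [IsFiniteMeasure (gaussianTilt ν)] (ξ : V) :
    ‖charFun ν ξ‖ₑ ^ 2 ≤ gaussianWeight V 1 Set.univ *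
      ∫⁻ η, ENNReal.ofReal (Real.exp (-‖η - ξ‖ ^ 2)) * ‖charFun (gaussianTilt ν) η‖ₑ ^ 2 := by
  have hm : Measurable fun w => ‖charFun (gaussianTilt ν) (ξ + w)‖ₑ :=
    (measurable_charFun.comp (measurable_const_add ξ)).enorm
  have h1 : ‖charFun ν ξ‖ₑ ≤ ∫⁻ w, ‖charFun (gaussianTilt ν) (ξ + w)‖ₑ ∂gaussianWeight V 1 := by
    refine le_trans ?_ (enorm_integral_le_lintegral_enorm _)
    rw [integral_charFun_gaussianTilt, enorm_mul]
    refine le_mul_of_one_le_left' ?_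
    rw [← ofReal_norm, Complex.norm_real, Real.norm_of_nonneg (by positivity), ← ENNReal.ofReal_one]
    exact ENNReal.ofReal_le_ofReal
      (Real.one_le_rpow (by linarith [Real.two_le_pi]) (by positivity))
  calc ‖charFun ν ξ‖ₑ ^ 2
      ≤ (∫⁻ w, 1 * ‖charFun (gaussianTilt ν) (ξ + w)‖ₑ ∂gaussianWeight V 1) ^ 2 := by
        simp only [one_mul]
        gcongr
    _ ≤ _ := sq_lintegral_mul_le aemeasurable_const hm.aemeasurable
    _ = gaussianWeight V 1 Set.univ * ∫⁻ w, (fun η => ENNReal.ofReal (Real.exp (-‖η - ξ‖ ^ 2)) *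
          ‖charFun (gaussianTilt ν) η‖ₑ ^ 2) (ξ + w) := by
        rw [lintegral_gaussianWeight _ (hm.pow_const 2)]
        simp
    _ = _ := by
        rw [lintegral_add_left_eq_self (μ := (volume : Measure V)) (fun η =>
          ENNReal.ofReal (Real.exp (-‖η - ξ‖ ^ 2)) * ‖charFun (gaussianTilt ν) η‖ₑ ^ 2) ξ]

end Smoothing

/-- Averaging the Fourier transform of a Frostman measure against dilates of another one. -/
theorem FrostmanWith.exists_lintegral_sq_charFun_le
    {μ ν : Measure (EuclideanSpace ℝ (Fin 2))} [IsProbabilityMeasure μ] [IsProbabilityMeasure ν]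
    {C D s s' ρ : ℝ} (hμ : FrostmanWith μ C s) (hν : FrostmanWith ν D s') (hC : 0 ≤ C)
    (hD : 0 ≤ D) (hμρ : ∀ᵐ x ∂μ, ‖x‖ ≤ ρ) (hνρ : ∀ᵐ x ∂ν, ‖x‖ ≤ ρ) :
    ∃ C', 0 ≤ C' ∧ ∀ t : ℝ, 1 ≤ t →
      ∫⁻ x, ‖charFun ν (t • x)‖ₑ ^ 2 ∂μ ≤ ENNReal.ofReal (C' * t ^ (2 - s - s')) := by
  set G := gaussianWeight (EuclideanSpace ℝ (Fin 2)) 1 Set.univ with hG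
  have hfinG := isFiniteMeasure_gaussianWeight (V := EuclideanSpace ℝ (Fin 2)) one_pos
  have hGtop : G ≠ ∞ := measure_ne_top _ _
  set e := Real.exp (ρ ^ 2 / 4) with he
  have hle := gaussianTilt_le hνρ
  set ν' := gaussianTilt ν with hν'
  have huniv : ν' Set.univ ≤ ENNReal.ofReal e := (hle Set.univ).trans (by simp [he])
  have hfin : IsFiniteMeasure ν' := ⟨huniv.trans_lt ENNReal.ofReal_lt_top⟩
  have hF : FrostmanWith ν' (e * D) s' := fun x r hr => by
    refine (hle _).trans ?_
    rw [Measure.smul_apply, smul_eq_mul, mul_assoc, ENNReal.ofReal_mul (by positivity)]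
    gcongr
    exact hν x r hr
  have hg := gaussianSum_nonneg s
  have hg' := gaussianSum_nonneg s'
  refine ⟨G.toReal * (Real.exp (ρ ^ 2 / 2) * (C * gaussianSum s * (Real.sqrt 2)⁻¹ ^ (-s))) *
    (4 * Real.pi * (e * D * gaussianSum s' * e)), by positivity, fun t ht => ?_⟩
  have ht0 : 0 < t := by linarith
  have hφ : Measurable fun η => ‖charFun ν' η‖ₑ ^ 2 := measurable_charFun.enorm.pow_const 2
  have henergy : ∫⁻ η, ENNReal.ofReal (Real.exp (-(4 * t ^ 2)⁻¹ * ‖η‖ ^ 2)) * ‖charFun ν' η‖ₑ ^ 2 ≤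
      ENNReal.ofReal (4 * Real.pi * (e * D * gaussianSum s' * e) * t ^ (2 - s')) := by
    rw [lintegral_sq_charFun_gaussianWeight (by positivity)]
    calc _ ≤ ENNReal.ofReal ((Real.pi / (4 * t ^ 2)⁻¹) ^
          (Module.finrank ℝ (EuclideanSpace ℝ (Fin 2)) / 2 : ℝ)) *
          ∫⁻ _x, ENNReal.ofReal (e * D * gaussianSum s' * t ^ (-s')) ∂ν' := by
            gcongr with x
            refine le_trans (le_of_eq (lintegral_congr fun y => ?_))
              (hF.lintegral_exp_neg_sq_dist_le (by positivity) ht0 x)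
            congr 2
            field_simp
      _ ≤ ENNReal.ofReal ((Real.pi / (4 * t ^ 2)⁻¹) ^
          (Module.finrank ℝ (EuclideanSpace ℝ (Fin 2)) / 2 : ℝ)) *
          (ENNReal.ofReal (e * D * gaussianSum s' * t ^ (-s')) * ENNReal.ofReal e) := by
            rw [lintegral_const]
            gcongr
      _ = _ := by
        rw [← ENNReal.ofReal_mul (by positivity), ← ENNReal.ofReal_mul (by positivity)]
        congr 1
        rw [finrank_euclideanSpace_fin, Nat.cast_ofNat, div_self two_ne_zero, Real.rpow_one,
          show 2 - s' = (2 : ℕ) + -s' by push_cast; ring, Real.rpow_add ht0, Real.rpow_natCast]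
        field_simp
  have hinner : ∀ η, ∫⁻ x, ENNReal.ofReal (Real.exp (-‖η - t • x‖ ^ 2)) ∂μ ≤
      ENNReal.ofReal (Real.exp (ρ ^ 2 / 2) * (C * gaussianSum s * (Real.sqrt 2)⁻¹ ^ (-s)) *
        t ^ (-s)) * ENNReal.ofReal (Real.exp (-(4 * t ^ 2)⁻¹ * ‖η‖ ^ 2)) := fun η => by
    calc _ ≤ ∫⁻ x, ENNReal.ofReal (Real.exp (ρ ^ 2 / 2)) *
          (ENNReal.ofReal (Real.exp (-(4 * t ^ 2)⁻¹ * ‖η‖ ^ 2)) *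
          ENNReal.ofReal (Real.exp (-(t / Real.sqrt 2 * dist x (t⁻¹ • η)) ^ 2))) ∂μ := by
            refine lintegral_mono_ae ?_
            filter_upwards [hμρ] with x hx
            rw [← ENNReal.ofReal_mul (by positivity), ← ENNReal.ofReal_mul (by positivity)]
            exact ENNReal.ofReal_le_ofReal (exp_neg_sq_norm_sub_smul_le ht hx)
      _ = ENNReal.ofReal (Real.exp (ρ ^ 2 / 2)) *
          (ENNReal.ofReal (Real.exp (-(4 * t ^ 2)⁻¹ * ‖η‖ ^ 2)) *
          ∫⁻ x, ENNReal.ofReal (Real.exp (-(t / Real.sqrt 2 * dist x (t⁻¹ • η)) ^ 2)) ∂μ) := by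
            rw [lintegral_const_mul _ (by fun_prop), lintegral_const_mul _ (by fun_prop)]
      _ ≤ ENNReal.ofReal (Real.exp (ρ ^ 2 / 2)) *
          (ENNReal.ofReal (Real.exp (-(4 * t ^ 2)⁻¹ * ‖η‖ ^ 2)) *
          ENNReal.ofReal (C * gaussianSum s * (t / Real.sqrt 2) ^ (-s))) := by
            gcongr
            exact hμ.lintegral_exp_neg_sq_dist_le hC (by positivity) _
      _ = _ := by
        rw [← ENNReal.ofReal_mul (by positivity), ← ENNReal.ofReal_mul (by positivity),
          ← ENNReal.ofReal_mul (by positivity), div_eq_mul_inv t,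
          Real.mul_rpow ht0.le (by positivity)]
        congr 1
        ring
  calc ∫⁻ x, ‖charFun ν (t • x)‖ₑ ^ 2 ∂μ
      ≤ ∫⁻ x, G * (∫⁻ η, ENNReal.ofReal (Real.exp (-‖η - t • x‖ ^ 2)) * ‖charFun ν' η‖ₑ ^ 2) ∂μ :=
        lintegral_mono fun x => sq_enorm_charFun_le _
    _ = G * ∫⁻ η, (∫⁻ x, ENNReal.ofReal (Real.exp (-‖η - t • x‖ ^ 2)) ∂μ) *
          ‖charFun ν' η‖ₑ ^ 2 := by
        have hmeas : Measurable (Function.uncurry fun (x η : EuclideanSpace ℝ (Fin 2)) =>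
            ENNReal.ofReal (Real.exp (-‖η - t • x‖ ^ 2)) * ‖charFun ν' η‖ₑ ^ 2) := by
          refine Measurable.mul ?_ (hφ.comp measurable_snd)
          fun_prop
        rw [lintegral_const_mul _ hmeas.lintegral_prod_right, lintegral_lintegral_swap
          hmeas.aemeasurable]
        congr 1
        refine lintegral_congr fun η => ?_
        rw [lintegral_mul_const _ (by fun_prop)]
    _ ≤ G * ∫⁻ η, ENNReal.ofReal (Real.exp (ρ ^ 2 / 2) *
          (C * gaussianSum s * (Real.sqrt 2)⁻¹ ^ (-s)) * t ^ (-s)) *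
          (ENNReal.ofReal (Real.exp (-(4 * t ^ 2)⁻¹ * ‖η‖ ^ 2)) * ‖charFun ν' η‖ₑ ^ 2) := by
        refine mul_le_mul_right (lintegral_mono fun η => ?_) _
        rw [← mul_assoc]
        exact mul_le_mul_left (hinner η) _
    _ ≤ G * (ENNReal.ofReal (Real.exp (ρ ^ 2 / 2) *
          (C * gaussianSum s * (Real.sqrt 2)⁻¹ ^ (-s)) * t ^ (-s)) *
          ENNReal.ofReal (4 * Real.pi * (e * D * gaussianSum s' * e) * t ^ (2 - s'))) := by
        rw [lintegral_const_mul _ (by fun_prop)]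
        gcongr
    _ = _ := by
        rw [← ENNReal.ofReal_toReal hGtop, ← ENNReal.ofReal_mul (by positivity),
          ← ENNReal.ofReal_mul (by positivity), ENNReal.toReal_ofReal ENNReal.toReal_nonneg,
          show 2 - s - s' = -s + (2 - s') by ring, Real.rpow_add ht0]
        congr 1
        ring

theorem lintegral_lt_top_of_dyadic {φ : ℝ → ℝ≥0∞} {K q : ℝ} (hK : 0 ≤ K) (hq : q < 0)
    (h1 : ∀ t, φ t ≤ 1)
    (h : ∀ R : ℝ, 1 ≤ R → ∫⁻ t in {t | R ≤ |t| ∧ |t| ≤ 2 * R}, φ t ≤ ENNReal.ofReal (K * R ^ q)) :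
    ∫⁻ t, φ t < ∞ := by
  have hcover : (Set.univ : Set ℝ) ⊆ closedBall 0 1 ∪
      ⋃ j : ℕ, {t | (2 : ℝ) ^ j ≤ |t| ∧ |t| ≤ 2 * 2 ^ j} := fun t _ => by
    rcases le_or_gt |t| 1 with ht | ht
    · exact Or.inl (by simpa using ht)
    · obtain ⟨n, hn1, hn2⟩ := exists_nat_pow_near ht.le one_lt_two
      exact Or.inr (Set.mem_iUnion.2 ⟨n, hn1, by rw [← pow_succ']; exact hn2.le⟩)
  have hgeom : Summable fun j : ℕ => K * ((2 : ℝ) ^ q) ^ j :=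
    (summable_geometric_of_lt_one (by positivity)
      (Real.rpow_lt_one_of_one_lt_of_neg one_lt_two hq)).mul_left K
  calc ∫⁻ t, φ t = ∫⁻ t in Set.univ, φ t := (setLIntegral_univ φ).symm
    _ ≤ ∫⁻ t in closedBall 0 1 ∪ ⋃ j : ℕ, {t | (2 : ℝ) ^ j ≤ |t| ∧ |t| ≤ 2 * 2 ^ j}, φ t :=
        lintegral_mono_set hcover
    _ ≤ (∫⁻ t in closedBall 0 1, φ t) +
          ∫⁻ t in ⋃ j : ℕ, {t | (2 : ℝ) ^ j ≤ |t| ∧ |t| ≤ 2 * 2 ^ j}, φ t :=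
        lintegral_union_le _ _ _
    _ ≤ (∫⁻ t in closedBall (0 : ℝ) 1, 1) + ∑' j : ℕ, ENNReal.ofReal (K * ((2 : ℝ) ^ q) ^ j) := by
        refine add_le_add (lintegral_mono fun t => h1 t) ((lintegral_iUnion_le _ _).trans ?_)
        refine ENNReal.tsum_le_tsum fun j => ?_
        refine (h (2 ^ j) (one_le_pow₀ one_le_two)).trans (le_of_eq ?_)
        congr 2
        rw [← Real.rpow_natCast, ← Real.rpow_natCast, ← Real.rpow_mul two_pos.le,
          ← Real.rpow_mul two_pos.le, mul_comm]
    _ < ∞ := by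
        rw [← ENNReal.ofReal_tsum_of_nonneg (fun j => by positivity) hgeom]
        simp

theorem measurable_measure_ball {X : Type*} [PseudoMetricSpace X] [SecondCountableTopology X]
    [MeasurableSpace X] [OpensMeasurableSpace X] {ν : Measure X} [SFinite ν] (r : ℝ) :
    Measurable fun x => ν (ball x r) :=
  measurable_measure_prodMk_left (s := {p : X × X | dist p.2 p.1 < r})
    (measurableSet_lt (measurable_snd.dist measurable_fst) measurable_const)

/-- A measure on the line with square integrable Fourier transform does not charge null sets. -/
theorem volume_pos_of_lintegral_sq_charFun_lt_top {ν : Measure ℝ} [IsProbabilityMeasure ν]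
    (hν : ∫⁻ t, ‖charFun ν t‖ₑ ^ 2 < ∞) {T : Set ℝ} (hT : IsCompact T) (hνT : ν Tᶜ = 0) :
    0 < volume T := by
  set M := ∫⁻ t, ‖charFun ν t‖ₑ ^ 2 with hM
  have henergy : ∀ δ : ℝ, 0 < δ → ∫⁻ v, ν (ball v (2 * δ)) ∂ν ≤
      ENNReal.ofReal δ * (ENNReal.ofReal (Real.exp 1) * M) := fun δ hδ => by
    set I := ∫⁻ x, ∫⁻ y, ENNReal.ofReal (Real.exp (-dist y x ^ 2 / (4 * δ ^ 2))) ∂ν ∂ν with hI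
    have h1 : ENNReal.ofReal δ⁻¹ * I ≤ M := by
      calc ENNReal.ofReal δ⁻¹ * I
          ≤ ENNReal.ofReal ((Real.pi / δ ^ 2) ^ (Module.finrank ℝ ℝ / 2 : ℝ)) * I := by
            gcongr
            rw [Module.finrank_self, Nat.cast_one, ← Real.sqrt_eq_rpow]
            refine Real.le_sqrt_of_sq_le ?_
            rw [inv_pow, ← one_div]
            gcongr
            linarith [Real.two_le_pi]
        _ = ∫⁻ t, ENNReal.ofReal (Real.exp (-δ ^ 2 * ‖t‖ ^ 2)) * ‖charFun ν t‖ₑ ^ 2 :=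
            (lintegral_sq_charFun_gaussianWeight (by positivity)).symm
        _ ≤ M := by
            refine lintegral_mono fun t => mul_le_of_le_one_left' ?_
            rw [← ENNReal.ofReal_one]
            refine ENNReal.ofReal_le_ofReal (Real.exp_le_one_iff.2 ?_)
            rw [neg_mul]
            exact neg_nonpos.2 (by positivity)
    have h2 : I ≤ ENNReal.ofReal δ * M := by
      calc I = ENNReal.ofReal δ * (ENNReal.ofReal δ⁻¹ * I) := by
            rw [← mul_assoc, ← ENNReal.ofReal_mul hδ.le, mul_inv_cancel₀ hδ.ne',
              ENNReal.ofReal_one, one_mul]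
        _ ≤ _ := by gcongr
    calc ∫⁻ v, ν (ball v (2 * δ)) ∂ν
        ≤ ∫⁻ v, ENNReal.ofReal (Real.exp 1) *
          ∫⁻ y, ENNReal.ofReal (Real.exp (-dist y v ^ 2 / (4 * δ ^ 2))) ∂ν ∂ν := by
          refine lintegral_mono fun v => ?_
          rw [← lintegral_const_mul _ (by fun_prop), ← lintegral_indicator_one measurableSet_ball]
          refine lintegral_mono fun y => ?_
          refine Set.indicator_apply_le' (fun hy => ?_) fun _ => zero_le
          rw [Pi.one_apply, ← ENNReal.ofReal_mul (by positivity), ← Real.exp_add,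
            ← ENNReal.ofReal_one]
          refine ENNReal.ofReal_le_ofReal (Real.one_le_exp ?_)
          rw [mem_ball] at hy
          have : dist y v ^ 2 / (4 * δ ^ 2) ≤ 1 := by
            rw [div_le_one (by positivity)]
            nlinarith [dist_nonneg (x := y) (y := v)]
          rw [neg_div]
          linarith
      _ = ENNReal.ofReal (Real.exp 1) * I := by
          rw [lintegral_const_mul]
          exact Measurable.lintegral_prod_right (by fun_prop)
      _ ≤ _ := by
          rw [mul_left_comm]
          gcongr
  have hbound : ∀ δ : ℝ, 0 < δ →
      2 ≤ volume (cthickening δ T) * (ENNReal.ofReal (Real.exp 1) * M) := fun δ hδ => by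
    have hker : Measurable
        (Function.uncurry fun u v : ℝ => (ball v δ).indicator 1 u : ℝ × ℝ → ℝ≥0∞) := by
      have : (Function.uncurry fun u v : ℝ => (ball v δ).indicator (1 : ℝ → ℝ≥0∞) u) =
          {p : ℝ × ℝ | dist p.1 p.2 < δ}.indicator 1 := by
        ext p
        simp [Function.uncurry, Set.indicator]
      rw [this]
      exact measurable_one.indicator (measurableSet_lt (by fun_prop) measurable_const)
    have hball : ∀ u, ν (ball u δ) = ∫⁻ v, (ball v δ).indicator 1 u ∂ν := fun u => by
      rw [← lintegral_indicator_one measurableSet_ball]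
      refine lintegral_congr fun v => ?_
      simp only [Set.indicator, mem_ball, dist_comm, Pi.one_apply]
    have hmeas := measurable_measure_ball (ν := ν) δ
    have hmass : ∫⁻ u, ν (ball u δ) = ENNReal.ofReal (2 * δ) := by
      simp only [hball]
      rw [lintegral_lintegral_swap hker.aemeasurable]
      simp [lintegral_indicator_one measurableSet_ball]
    have hsq : ∫⁻ u, ν (ball u δ) ^ 2 ≤
        ENNReal.ofReal (2 * δ) * ∫⁻ v, ν (ball v (2 * δ)) ∂ν := by
      have hmeas2 := measurable_measure_ball (ν := ν) (2 * δ)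
      calc ∫⁻ u, ν (ball u δ) ^ 2
          ≤ ∫⁻ u, ∫⁻ v, (ball v δ).indicator 1 u * ν (ball v (2 * δ)) ∂ν := by
            refine lintegral_mono fun u => ?_
            rw [sq]
            nth_rw 1 [hball]
            rw [← lintegral_mul_const _ hker.of_uncurry_left]
            refine lintegral_mono fun v => ?_
            by_cases huv : u ∈ ball v δ
            · refine mul_le_mul_right (measure_mono (ball_subset_ball' ?_)) _
              linarith [mem_ball.1 huv]
            · simp [huv]
        _ = ∫⁻ v, (∫⁻ u, (ball v δ).indicator 1 u * ν (ball v (2 * δ))) ∂ν :=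
            lintegral_lintegral_swap (hker.mul (hmeas2.comp measurable_snd)).aemeasurable
        _ = _ := by
            rw [← lintegral_const_mul _ hmeas2]
            refine lintegral_congr fun v => ?_
            rw [lintegral_mul_const _ (measurable_one.indicator measurableSet_ball),
              lintegral_indicator_one measurableSet_ball, Real.volume_ball]
    have hsupp : ∀ u, ν (ball u δ) = (cthickening δ T).indicator 1 u * ν (ball u δ) := fun u => by
      by_cases hu : u ∈ cthickening δ T
      · simp [hu]
      · have : ν (ball u δ) = 0 := by
          refine measure_mono_null (t := Tᶜ) (fun v hv hvT => hu ?_) hνT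
          exact mem_cthickening_of_dist_le u v δ T hvT (by rw [dist_comm]; exact (mem_ball.1 hv).le)
        simp [this]
    have hthick : MeasurableSet (cthickening δ T) := isClosed_cthickening.measurableSet
    have hcs : ENNReal.ofReal (2 * δ) ^ 2 ≤ volume (cthickening δ T) * ∫⁻ u, ν (ball u δ) ^ 2 := by
      rw [← hmass, lintegral_congr hsupp]
      refine (sq_lintegral_mul_le (measurable_one.indicator hthick).aemeasurable
        hmeas.aemeasurable).trans (mul_le_mul_left (le_of_eq ?_) _)
      rw [← lintegral_indicator_one hthick]
      refine lintegral_congr fun u => ?_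
      by_cases hu : u ∈ cthickening δ T <;> simp [hu]
    have hδ0 : ENNReal.ofReal δ ≠ 0 := by simpa using hδ
    have hfinal : ENNReal.ofReal δ * (ENNReal.ofReal δ * 2 * 2) ≤ ENNReal.ofReal δ *
        (ENNReal.ofReal δ * 2 *
          (volume (cthickening δ T) * (ENNReal.ofReal (Real.exp 1) * M))) := by
      have h2δ : ENNReal.ofReal (2 * δ) = 2 * ENNReal.ofReal δ := by
        rw [ENNReal.ofReal_mul two_pos.le, ENNReal.ofReal_ofNat]
      calc ENNReal.ofReal δ * (ENNReal.ofReal δ * 2 * 2) = ENNReal.ofReal (2 * δ) ^ 2 := by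
            rw [h2δ]; ring
        _ ≤ volume (cthickening δ T) * (ENNReal.ofReal (2 * δ) *
              (ENNReal.ofReal δ * (ENNReal.ofReal (Real.exp 1) * M))) := by
            refine hcs.trans ?_
            gcongr
            refine hsq.trans ?_
            gcongr
            exact henergy δ hδ
        _ = _ := by rw [h2δ]; ring
    rwa [ENNReal.mul_le_mul_iff_right hδ0 ENNReal.ofReal_ne_top,
      ENNReal.mul_le_mul_iff_right (by simpa using hδ) (by finiteness)] at hfinal
  have hlim : Filter.Tendsto (fun δ => volume (cthickening δ T) * (ENNReal.ofReal (Real.exp 1) * M))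
      (nhdsWithin 0 (Set.Ioi 0)) (nhds (volume T * (ENNReal.ofReal (Real.exp 1) * M))) :=
    ENNReal.Tendsto.mul_const ((tendsto_measure_cthickening_of_isCompact hT).mono_left
      nhdsWithin_le_nhds) (Or.inr (by finiteness))
  have h2 := ge_of_tendsto hlim
    (Filter.eventually_of_mem self_mem_nhdsWithin fun δ hδ => hbound δ hδ)
  rw [pos_iff_ne_zero]
  intro h0
  simp [h0] at h2

theorem enorm_charFun_abs_smul {V : Type*} [NormedAddCommGroup V] [InnerProductSpace ℝ V]
    [MeasurableSpace V] (μ : Measure V) (t : ℝ) (x : V) :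
    ‖charFun μ (|t| • x)‖ₑ = ‖charFun μ (t • x)‖ₑ := by
  rcases abs_choice t with h | h
  · rw [h]
  · rw [h, neg_smul, charFun_neg, ← ofReal_norm, ← ofReal_norm, RCLike.norm_conj]

theorem sq_enorm_charFun_map_inner_le {V : Type*} [NormedAddCommGroup V] [InnerProductSpace ℝ V]
    [FiniteDimensional ℝ V] [MeasurableSpace V] [BorelSpace V] (μ ν κ : Measure V)
    [IsFiniteMeasure μ] [IsFiniteMeasure ν] [IsFiniteMeasure κ] (t : ℝ) :
    ‖charFun ((μ.prod (Measure.conv ν κ)).map fun p => ⟪p.1, p.2⟫) t‖ₑ ^ 2 ≤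
      (∫⁻ x, ‖charFun ν (t • x)‖ₑ ^ 2 ∂μ) * ∫⁻ x, ‖charFun κ (t • x)‖ₑ ^ 2 ∂μ := by
  have hchar : charFun ((μ.prod (Measure.conv ν κ)).map fun p => ⟪p.1, p.2⟫) t =
      ∫ x, charFun ν (t • x) * charFun κ (t • x) ∂μ := by
    rw [charFun_apply_real, integral_map (by fun_prop) (by fun_prop), integral_prod]
    · refine integral_congr_ae (Filter.Eventually.of_forall fun x => ?_)
      simp only [← charFun_conv]
      rw [charFun_apply]
      refine integral_congr_ae (Filter.Eventually.of_forall fun y => ?_)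
      simp only [real_inner_smul_right, real_inner_comm]
      push_cast
      rfl
    · refine Integrable.of_bound (C := 1) (Continuous.aestronglyMeasurable (by fun_prop))
        (Filter.Eventually.of_forall fun z => ?_)
      rw [← Complex.ofReal_mul, Complex.norm_exp_ofReal_mul_I]
  have hm : ∀ σ : Measure V, IsFiniteMeasure σ → Measurable fun x => ‖charFun σ (t • x)‖ₑ :=
    fun σ _ => (measurable_charFun.comp (measurable_const_smul t)).enorm
  rw [hchar]
  calc _ ≤ (∫⁻ x, ‖charFun ν (t • x)‖ₑ * ‖charFun κ (t • x)‖ₑ ∂μ) ^ 2 := by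
        gcongr
        simpa only [enorm_mul] using enorm_integral_le_lintegral_enorm
          (μ := μ) (fun x => charFun ν (t • x) * charFun κ (t • x))
    _ ≤ _ := sq_lintegral_mul_le (hm ν inferInstance).aemeasurable (hm κ inferInstance).aemeasurable

/-- The push-forward of Frostman measures under `(x, y, z) ↦ x · (y + z)` has square integrable
Fourier transform once the exponents add up to more than `4`. -/
theorem FrostmanWith.lintegral_sq_charFun_map_inner_lt_top
    {μ ν κ : Measure (EuclideanSpace ℝ (Fin 2))} [IsProbabilityMeasure μ] [IsProbabilityMeasure ν]
    [IsProbabilityMeasure κ] {A B C a b d c ρ : ℝ}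
    (hμ : FrostmanWith μ A a) (hν : FrostmanWith ν B b) (hκ : FrostmanWith κ C d)
    (hA : 0 ≤ A) (hB : 0 ≤ B) (hC : 0 ≤ C) (hb1 : 1 ≤ b) (hb2 : b ≤ 2) (hsum : 4 < a + b + d)
    (hc : 0 < c) (hμc : ∀ᵐ x ∂μ, c ≤ ‖x‖)
    (hμρ : ∀ᵐ x ∂μ, ‖x‖ ≤ ρ) (hνρ : ∀ᵐ x ∂ν, ‖x‖ ≤ ρ) (hκρ : ∀ᵐ x ∂κ, ‖x‖ ≤ ρ) :
    ∫⁻ t, ‖charFun ((μ.prod (Measure.conv ν κ)).map fun p => ⟪p.1, p.2⟫) t‖ₑ ^ 2 < ∞ := by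
  obtain ⟨K₁, hK₁, h₁⟩ := hν.exists_lintegral_sq_charFun_smul_le hB hb1 hc hνρ
  obtain ⟨K₂, hK₂, h₂⟩ := hμ.exists_lintegral_sq_charFun_le hκ hA hC hμρ hκρ
  have hprob : IsProbabilityMeasure ((μ.prod (Measure.conv ν κ)).map fun p => ⟪p.1, p.2⟫) :=
    Measure.isProbabilityMeasure_map (by fun_prop)
  refine lintegral_lt_top_of_dyadic (K := K₂ * (Real.exp 4 * K₁)) (q := 4 - (a + b + d))
    (by positivity) (by linarith) (fun t => ?_) fun R hR => ?_
  · refine pow_le_one₀ zero_le ?_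
    rw [← ofReal_norm, ← ENNReal.ofReal_one]
    exact ENNReal.ofReal_le_ofReal (norm_charFun_le_one t)
  have hR0 : 0 < R := by linarith
  have hset : MeasurableSet {t : ℝ | R ≤ |t| ∧ |t| ≤ 2 * R} :=
    (measurableSet_le measurable_const continuous_abs.measurable).inter
      (measurableSet_le continuous_abs.measurable measurable_const)
  have hmeas : Measurable (Function.uncurry fun (t : ℝ) (x : EuclideanSpace ℝ (Fin 2)) =>
      ‖charFun ν (t • x)‖ₑ ^ 2) :=
    (measurable_charFun.comp (measurable_fst.smul measurable_snd)).enorm.pow_const 2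
  have hB' : ∫⁻ t in {t | R ≤ |t| ∧ |t| ≤ 2 * R}, ∫⁻ x, ‖charFun ν (t • x)‖ₑ ^ 2 ∂μ ≤
      ENNReal.ofReal (Real.exp 4 * (K₁ * R ^ (2 - b))) := by
    calc ∫⁻ t in {t | R ≤ |t| ∧ |t| ≤ 2 * R}, ∫⁻ x, ‖charFun ν (t • x)‖ₑ ^ 2 ∂μ
        ≤ ∫⁻ t in {t | R ≤ |t| ∧ |t| ≤ 2 * R}, ∫⁻ x, ENNReal.ofReal (Real.exp 4) *
            (ENNReal.ofReal (Real.exp (-(R ^ 2)⁻¹ * ‖t‖ ^ 2)) * ‖charFun ν (t • x)‖ₑ ^ 2) ∂μ := by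
          refine setLIntegral_mono' hset fun t ht => lintegral_mono fun x => ?_
          rw [← mul_assoc, ← ENNReal.ofReal_mul (by positivity), ← Real.exp_add]
          refine le_mul_of_one_le_left' ?_
          rw [← ENNReal.ofReal_one]
          refine ENNReal.ofReal_le_ofReal (Real.one_le_exp ?_)
          have : (R ^ 2)⁻¹ * ‖t‖ ^ 2 ≤ 4 := by
            rw [inv_mul_le_iff₀ (by positivity), Real.norm_eq_abs]
            nlinarith [ht.2, abs_nonneg t]
          linarith
      _ ≤ ∫⁻ t, ∫⁻ x, ENNReal.ofReal (Real.exp 4) *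
            (ENNReal.ofReal (Real.exp (-(R ^ 2)⁻¹ * ‖t‖ ^ 2)) * ‖charFun ν (t • x)‖ₑ ^ 2) ∂μ :=
          setLIntegral_le_lintegral _ _
      _ = ∫⁻ x, (∫⁻ t : ℝ, ENNReal.ofReal (Real.exp 4) *
            (ENNReal.ofReal (Real.exp (-(R ^ 2)⁻¹ * ‖t‖ ^ 2)) * ‖charFun ν (t • x)‖ₑ ^ 2)) ∂μ := by
          refine lintegral_lintegral_swap (Measurable.aemeasurable ?_)
          exact measurable_const.mul (Measurable.mul (by fun_prop) hmeas)
      _ ≤ ∫⁻ _x, ENNReal.ofReal (Real.exp 4 * (K₁ * R ^ (2 - b))) ∂μ := by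
          refine lintegral_mono_ae ?_
          filter_upwards [hμc, hμρ] with x hxc hxρ
          have hmx : Measurable fun t : ℝ => ‖charFun ν (t • x)‖ₑ ^ 2 := hmeas.of_uncurry_right
          rw [lintegral_const_mul _ (by fun_prop), ENNReal.ofReal_mul (by positivity)]
          gcongr
          exact h₁ x hxc hxρ R hR0
      _ = _ := by simp
  calc _ ≤ ∫⁻ t in {t | R ≤ |t| ∧ |t| ≤ 2 * R},
        ENNReal.ofReal (K₂ * R ^ (2 - a - d)) * ∫⁻ x, ‖charFun ν (t • x)‖ₑ ^ 2 ∂μ := by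
        refine setLIntegral_mono' hset fun t ht => ?_
        refine (sq_enorm_charFun_map_inner_le μ ν κ t).trans ?_
        rw [mul_comm]
        gcongr
        have h := h₂ |t| (hR.trans ht.1)
        simp only [enorm_charFun_abs_smul] at h
        refine h.trans (ENNReal.ofReal_le_ofReal ?_)
        gcongr K₂ * ?_
        exact Real.rpow_le_rpow_of_nonpos hR0 ht.1 (by linarith)
    _ = ENNReal.ofReal (K₂ * R ^ (2 - a - d)) *
          ∫⁻ t in {t | R ≤ |t| ∧ |t| ≤ 2 * R}, ∫⁻ x, ‖charFun ν (t • x)‖ₑ ^ 2 ∂μ :=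
        lintegral_const_mul _ hmeas.lintegral_prod_right
    _ ≤ ENNReal.ofReal (K₂ * R ^ (2 - a - d)) *
          ENNReal.ofReal (Real.exp 4 * (K₁ * R ^ (2 - b))) := by gcongr
    _ = _ := by
        rw [← ENNReal.ofReal_mul (by positivity),
          show 4 - (a + b + d) = (2 - a - d) + (2 - b) by ring, Real.rpow_add hR0]
        congr 1
        ring

theorem dimH_euclideanSpace_fin_two_le (K : Set (EuclideanSpace ℝ (Fin 2))) : dimH K ≤ 2 := by
  refine (dimH_mono (Set.subset_univ K)).trans ?_
  rw [Real.dimH_univ_eq_finrank, finrank_euclideanSpace_fin]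
  simp

theorem ae_map_prod_mem_image {X Y Z : Type*} [MeasurableSpace X] [MeasurableSpace Y]
    [MeasurableSpace Z] {μ : Measure X} {ν : Measure Y} [SFinite ν] {f : X × Y → Z}
    (hf : Measurable f) {A : Set X} {B : Set Y} (hA : ∀ᵐ x ∂μ, x ∈ A) (hB : ∀ᵐ y ∂ν, y ∈ B)
    (hS : MeasurableSet (f '' (A ×ˢ B))) : ∀ᵐ z ∂(μ.prod ν).map f, z ∈ f '' (A ×ˢ B) := by
  refine (ae_map_iff hf.aemeasurable hS).2 ?_
  filter_upwards [Measure.quasiMeasurePreserving_fst.ae hA,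
    Measure.quasiMeasurePreserving_snd.ae hB] with p hpA hpB
  exact Set.mem_image_of_mem f ⟨hpA, hpB⟩

theorem volume_inner_add_pos_of_le_norm {E F H : Set (EuclideanSpace ℝ (Fin 2))}
    (hE : IsCompact E) (hF : IsCompact F) (hH : IsCompact H)
    (hdim : 4 < dimH E + dimH F + dimH H) (hle : dimH H ≤ dimH F)
    {c : ℝ} (hc : 0 < c) (hEc : ∀ x ∈ E, c ≤ ‖x‖) :
    0 < volume {t : ℝ | ∃ x ∈ E, ∃ y ∈ F, ∃ z ∈ H, t = ⟪x, y + z⟫} := by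
  have htop : ∀ K : Set (EuclideanSpace ℝ (Fin 2)), dimH K ≠ ∞ := fun K =>
    ((dimH_euclideanSpace_fin_two_le K).trans_lt ENNReal.ofNat_lt_top).ne
  have htwo : ∀ K : Set (EuclideanSpace ℝ (Fin 2)), ((dimH K).toNNReal : ℝ) ≤ 2 := fun K => by
    exact_mod_cast ENNReal.toNNReal_mono ENNReal.ofNat_ne_top (dimH_euclideanSpace_fin_two_le K)
  have hle' : ((dimH H).toNNReal : ℝ) ≤ (dimH F).toNNReal := by
    exact_mod_cast ENNReal.toNNReal_mono (htop F) hle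
  have hdim' : (4 : ℝ) < (dimH E).toNNReal + (dimH F).toNNReal + (dimH H).toNNReal := by
    rw [← ENNReal.coe_toNNReal (htop E), ← ENNReal.coe_toNNReal (htop F),
      ← ENNReal.coe_toNNReal (htop H)] at hdim
    exact_mod_cast hdim
  have hE2 := htwo E
  have hF2 := htwo F
  have hH2 := htwo H
  set η : ℝ := ((dimH E).toNNReal + (dimH F).toNNReal + (dimH H).toNNReal - 4) / 4 with hη
  have hexp : ∀ K : Set (EuclideanSpace ℝ (Fin 2)), η ≤ (dimH K).toNNReal → IsCompact K →
      ∃ μ : Measure (EuclideanSpace ℝ (Fin 2)), IsProbabilityMeasure μ ∧ μ Kᶜ = 0 ∧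
        ∃ C, 0 ≤ C ∧ FrostmanWith μ C ((dimH K).toNNReal - η) := fun K hK hKc => by
    have hs : ((Real.toNNReal ((dimH K).toNNReal - η) : NNReal) : ℝ≥0∞) < dimH K := by
      nth_rw 2 [← ENNReal.coe_toNNReal (htop K)]
      rw [ENNReal.coe_lt_coe, ← NNReal.coe_lt_coe, Real.coe_toNNReal _ (by linarith)]
      linarith
    have h := exists_frostmanWith_of_lt_dimH hKc hs
    rwa [Real.coe_toNNReal _ (by linarith)] at h
  obtain ⟨μ, hμ, hμE, A, hA, hμA⟩ := hexp E (by linarith) hE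
  obtain ⟨ν, hν, hνF, B, hB, hνB⟩ := hexp F (by linarith) hF
  obtain ⟨κ, hκ, hκH, C, hC, hκC⟩ := hexp H (by linarith) hH
  obtain ⟨ρ, hρ⟩ := ((hE.union hF).union hH).isBounded.exists_norm_le
  have haeE : ∀ᵐ x ∂μ, x ∈ E := hμE
  have haeF : ∀ᵐ x ∂ν, x ∈ F := hνF
  have haeH : ∀ᵐ x ∂κ, x ∈ H := hκH
  have hL2 := hμA.lintegral_sq_charFun_map_inner_lt_top hνB hκC hA hB hC (by linarith)
    (by linarith) (by linarith) hc (haeE.mono hEc)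
    (haeE.mono fun x hx => hρ x (Or.inl (Or.inl hx)))
    (haeF.mono fun x hx => hρ x (Or.inl (Or.inr hx)))
    (haeH.mono fun x hx => hρ x (Or.inr hx))
  set S := (fun p : EuclideanSpace ℝ (Fin 2) × EuclideanSpace ℝ (Fin 2) => p.1 + p.2) '' (F ×ˢ H)
    with hS
  have hScomp : IsCompact S := (hF.prod hH).image (by fun_prop)
  set T := (fun p : EuclideanSpace ℝ (Fin 2) × EuclideanSpace ℝ (Fin 2) => ⟪p.1, p.2⟫) '' (E ×ˢ S)
    with hT
  have hTcomp : IsCompact T := (hE.prod hScomp).image (by fun_prop)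
  have hconv : ∀ᵐ y ∂(Measure.conv ν κ), y ∈ S :=
    ae_map_prod_mem_image (by fun_prop) haeF haeH hScomp.measurableSet
  have hsupp : ((μ.prod (Measure.conv ν κ)).map fun p => ⟪p.1, p.2⟫) Tᶜ = 0 :=
    ae_map_prod_mem_image (by fun_prop) haeE hconv hTcomp.measurableSet
  have hprob : IsProbabilityMeasure ((μ.prod (Measure.conv ν κ)).map fun p => ⟪p.1, p.2⟫) :=
    Measure.isProbabilityMeasure_map (by fun_prop)
  refine (volume_pos_of_lintegral_sq_charFun_lt_top hL2 hTcomp hsupp).trans_le (measure_mono ?_)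
  rintro _ ⟨⟨x, _⟩, ⟨hx, ⟨⟨y, z⟩, ⟨hy, hz⟩, rfl⟩⟩, rfl⟩
  exact ⟨x, hx, y, hy, z, hz, rfl⟩

theorem exists_lt_dimH_inter_le_norm {E : Set (EuclideanSpace ℝ (Fin 2))} {k m : ℝ≥0∞}
    (h : k < dimH E + m) : ∃ c : ℝ, 0 < c ∧ k < dimH (E ∩ {x | c ≤ ‖x‖}) + m := by
  have hsub : E ⊆ {0} ∪ ⋃ n : ℕ, E ∩ {x | 1 / ((n : ℝ) + 1) ≤ ‖x‖} := fun x hx => by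
    rcases eq_or_ne x 0 with rfl | h0
    · exact Or.inl rfl
    · obtain ⟨n, hn⟩ := exists_nat_one_div_lt (norm_pos_iff.2 h0)
      exact Or.inr (Set.mem_iUnion.2 ⟨n, hx, hn.le⟩)
  have hdim := dimH_mono hsub
  rw [dimH_union, dimH_singleton, dimH_iUnion, max_eq_right (zero_le)] at hdim
  have h' := h.trans_le (add_le_add_left hdim m)
  rw [ENNReal.iSup_add, lt_iSup_iff] at h'
  obtain ⟨n, hn⟩ := h'
  exact ⟨_, by positivity, hn⟩

/-- **Continuous sum-product theorem in the plane** (Theorem 1.5 of "Group actions,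
the Mattila integral and applications"). If `E, F, H ⊆ ℝ²` are compact with
`dim_H(E) + dim_H(F) + dim_H(H) > 4`, then the set
`E·(F+H) = { x·(y+z) : x ∈ E, y ∈ F, z ∈ H }` has positive Lebesgue measure. -/
theorem sum_product_plane_pos_measure
    (E F H : Set (EuclideanSpace ℝ (Fin 2)))
    (hE : IsCompact E) (hF : IsCompact F) (hH : IsCompact H)
    (hdim : 4 < dimH E + dimH F + dimH H) :
    0 < volume {t : ℝ | ∃ x ∈ E, ∃ y ∈ F, ∃ z ∈ H, t = ⟪x, y + z⟫} := by
  wlog hle : dimH H ≤ dimH F generalizing F H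
  · refine (this H F hH hF (by rwa [add_right_comm]) (le_of_not_ge hle)).trans_le
      (measure_mono ?_)
    rintro _ ⟨x, hx, y, hy, z, hz, rfl⟩
    exact ⟨x, hx, z, hz, y, hy, by rw [add_comm]⟩
  rw [add_assoc] at hdim
  obtain ⟨c, hc, hdim'⟩ := exists_lt_dimH_inter_le_norm hdim
  rw [← add_assoc] at hdim'
  refine (volume_inner_add_pos_of_le_norm (hE.inter_right (isClosed_le continuous_const
    continuous_norm)) hF hH hdim' hle hc fun x hx => hx.2).trans_le (measure_mono ?_)
  rintro _ ⟨x, hx, y, hy, z, hz, rfl⟩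
  exact ⟨x, hx.1, y, hy, z, hz, rfl⟩
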